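/- arXiv:1711.00211 — 3 statements merged into one kernel-verified Lean document; each statement's English description precedes it below -/
import Mathlib

section
/- Let d ≥ 2 and let u_0, …, u_d be unit vectors in ℝ^d such that the spherical distance δ(u_i, u_j) ≥ arccos(−1/d) − 2ε for all 0 ≤ i < j ≤ d, where 0 ≤ ε < 1/(9·d^(3.5)). Then there exist unit vectors v_0, …, v_d in ℝ^d that are the vertices of a regular simplex inscribed in the unit sphere (i.e. ⟨v_i, v_j⟩ = −1/d for all i ≠ j) such that δ(u_i, v_i) ≤ 9·d^(3.5)·ε for all i = 0, …, d. -/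
open scoped RealInnerProductSpace

/-!
The synthesis operator `T : y ↦ ∑ i, y i • u i` pulls the inner product of the space back to the
Gram matrix of the `u i`. The Gram matrix of a regular simplex acts on the vectors of zero
coordinate sum as multiplication by `1 + 1/d`, so if the Gram matrix of the `u i` is within `η` of
it in Frobenius norm, then `T` is an approximate similarity on that hyperplane. Normalising the
images of an orthonormal basis of singular vectors gives an exact similarity close to `T`, and this
maps the centred standard simplex to the required regular one. The centroid of the `u i` has norm
at most `η`, so it costs only another `η`.

The distance hypothesis bounds the entries of the error matrix from above only; that is enough, as
the entries of a Gram matrix have nonnegative sum and those of the simplex Gram matrix sum to `0`.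
-/

section Estimates

theorem le_add_of_arccos_sub_le_arccos {a b θ : ℝ} (ha : |a| ≤ 1) (hb : |b| ≤ 1) (hθ : 0 ≤ θ)
    (h : Real.arccos a - θ ≤ Real.arccos b) : b ≤ a + θ := by
  have hcos : b - a ≤ |Real.arccos b - Real.arccos a| := by
    have := (le_abs_self _).trans (Real.abs_cos_sub_cos_le (Real.arccos b) (Real.arccos a))
    rwa [Real.cos_arccos (abs_le.mp hb).1 (abs_le.mp hb).2,
      Real.cos_arccos (abs_le.mp ha).1 (abs_le.mp ha).2] at this
  rcases le_total b a with hba | hab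
  · linarith
  · rw [abs_of_nonpos (sub_nonpos.mpr (Real.arccos_le_arccos hab))] at hcos
    linarith

theorem sum_sq_le_card_mul_sq {κ : Type*} [Fintype κ] {f : κ → ℝ} {a : ℝ} (hfa : ∀ k, f k ≤ a)
    (hf : 0 ≤ ∑ k, f k) : ∑ k, f k ^ 2 ≤ (Fintype.card κ * a) ^ 2 := by
  rcases isEmpty_or_nonempty κ with _ | _
  · simp
  set N : ℝ := (Fintype.card κ : ℝ) with hN
  set G : ℝ := ∑ k, (a - f k) with hG
  have hN1 : 1 ≤ N := Nat.one_le_cast.mpr Fintype.card_pos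
  have hG0 : 0 ≤ G := Finset.sum_nonneg fun k _ => sub_nonneg.mpr (hfa k)
  have hGle : G ≤ N * a := by simpa [hG, hN] using hf
  have ha : 0 ≤ a := nonneg_of_mul_nonneg_right (hG0.trans hGle) (by linarith)
  have hgap : ∑ k, (a - f k) ^ 2 ≤ G ^ 2 :=
    Finset.sum_sq_le_sq_sum_of_nonneg fun k _ => sub_nonneg.mpr (hfa k)
  calc ∑ k, f k ^ 2 = ∑ k, (a ^ 2 - 2 * a * (a - f k) + (a - f k) ^ 2) :=
        Finset.sum_congr rfl fun k _ => by ring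
    _ = N * a ^ 2 - 2 * a * G + ∑ k, (a - f k) ^ 2 := by
        simp only [Finset.sum_add_distrib, Finset.sum_sub_distrib (f := fun _ => a ^ 2),
          ← Finset.mul_sum, Finset.sum_const, Finset.card_univ, nsmul_eq_mul, ← hG, ← hN]
    _ ≤ N * a ^ 2 - 2 * a * G + G * (N * a) := by nlinarith
    _ ≤ N * a ^ 2 + (N - 1) * a * G := by nlinarith [mul_nonneg ha hG0]
    _ ≤ N * a ^ 2 + (N - 1) * a * (N * a) := by
        have : 0 ≤ N - 1 := by linarith
        gcongr
    _ = (N * a) ^ 2 := by ring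

theorem abs_sub_sqrt_le {s c η : ℝ} (hs : 0 ≤ s) (hc : 0 < c) (h : |s ^ 2 - c| ≤ η) :
    |s - √c| ≤ η / √c := by
  have hfactor : s ^ 2 - c = (s - √c) * (s + √c) := by
    linear_combination Real.sq_sqrt hc.le
  rw [le_div_iff₀ (Real.sqrt_pos.mpr hc)]
  calc |s - √c| * √c ≤ |s - √c| * |s + √c| := by
        gcongr
        exact (le_add_of_nonneg_left hs).trans (le_abs_self _)
    _ ≤ η := by rwa [← abs_mul, ← hfactor]

theorem arccos_inner_le_pi_div_two_mul_norm_sub {E : Type*} [NormedAddCommGroup E]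
    [InnerProductSpace ℝ E] {x y : E} (hx : ‖x‖ = 1) (hy : ‖y‖ = 1) :
    Real.arccos ⟪x, y⟫ ≤ Real.pi / 2 * ‖x - y‖ := by
  have hinner : |⟪x, y⟫| ≤ 1 := by simpa [hx, hy] using abs_real_inner_le_norm x y
  set θ := Real.arccos ⟪x, y⟫ with hθ
  have hchord : ‖x - y‖ ^ 2 = 2 - 2 * Real.cos θ := by
    rw [hθ, Real.cos_arccos (abs_le.mp hinner).1 (abs_le.mp hinner).2, norm_sub_sq_real, hx, hy]
    ring
  have hcos : Real.cos θ ≤ 1 - 2 / Real.pi ^ 2 * θ ^ 2 :=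
    Real.cos_le_one_sub_mul_cos_sq <|
      (abs_of_nonneg (Real.arccos_nonneg _)).trans_le (Real.arccos_le_pi _)
  refine le_of_sq_le_sq ?_ (by positivity)
  calc θ ^ 2 = (Real.pi / 2) ^ 2 * (2 * (2 / Real.pi ^ 2 * θ ^ 2)) := by field_simp
    _ ≤ (Real.pi / 2) ^ 2 * ‖x - y‖ ^ 2 := by gcongr; linarith
    _ = (Real.pi / 2 * ‖x - y‖) ^ 2 := by ring

theorem two_mul_pi_mul_add_one_sq_le {d : ℝ} (hd : 2 ≤ d) :
    2 * Real.pi * (d + 1) ^ 2 ≤ 9 * d ^ (3.5 : ℝ) := by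
  have hsqrt : 1.4 ≤ √d := Real.le_sqrt_of_sq_le (by norm_num; linarith)
  have hrpow : d ^ (3.5 : ℝ) = d ^ 3 * √d := by
    rw [Real.sqrt_eq_rpow, ← Real.rpow_natCast, ← Real.rpow_add (by linarith)]
    norm_num
  calc 2 * Real.pi * (d + 1) ^ 2 ≤ 2 * 3.15 * (d + 1) ^ 2 := by
        gcongr
        exact Real.pi_lt_d2.le
    _ ≤ 9 * (d ^ 3 * 1.4) := by nlinarith [mul_nonneg (sub_nonneg.mpr hd) (sq_nonneg d)]
    _ ≤ 9 * d ^ (3.5 : ℝ) := by rw [hrpow]; gcongr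

end Estimates

section Frobenius

open Matrix WithLp
open scoped Matrix.Norms.Frobenius

variable {m n : Type*} [Fintype m] [Fintype n]

theorem abs_dotProduct_mulVec_le_frobenius (A : Matrix m n ℝ) (x : EuclideanSpace ℝ m)
    (y : EuclideanSpace ℝ n) : |x ⬝ᵥ A *ᵥ y| ≤ ‖A‖ * ‖x‖ * ‖y‖ := by
  have hmul : ‖toLp 2 (A *ᵥ y)‖ ≤ ‖A‖ * ‖y‖ := by
    have := frobenius_norm_mul A (replicateCol Unit y)
    rwa [← replicateCol_mulVec, frobenius_norm_replicateCol, frobenius_norm_replicateCol] at this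
  calc |x ⬝ᵥ A *ᵥ y| = |⟪toLp 2 (A *ᵥ y), x⟫| := by
        simp [EuclideanSpace.inner_eq_star_dotProduct]
    _ ≤ ‖toLp 2 (A *ᵥ y)‖ * ‖x‖ := abs_real_inner_le_norm _ _
    _ ≤ ‖A‖ * ‖x‖ * ‖y‖ := by rw [mul_right_comm]; gcongr

theorem frobenius_norm_le_of_sum_nonneg {A : Matrix m n ℝ} {a : ℝ} (hA : ∀ i j, A i j ≤ a)
    (hsum : 0 ≤ ∑ i, ∑ j, A i j) :
    ‖A‖ ≤ Fintype.card m * Fintype.card n * a := by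
  have hsq : ∑ p : m × n, A p.1 p.2 ^ 2 ≤ (Fintype.card (m × n) * a) ^ 2 :=
    sum_sq_le_card_mul_sq (fun p => hA p.1 p.2) (by rwa [Fintype.sum_prod_type])
  have hnonneg : 0 ≤ Fintype.card m * Fintype.card n * a := by
    simpa [mul_assoc] using
      hsum.trans (Finset.sum_le_sum fun i _ => Finset.sum_le_sum fun j _ => hA i j)
  rw [Fintype.sum_prod_type, Fintype.card_prod, Nat.cast_mul] at hsq
  rw [frobenius_norm_def, ← Real.sqrt_eq_rpow]
  simpa using Real.sqrt_le_iff.mpr ⟨hnonneg, hsq⟩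

end Frobenius

section Polar

variable {𝕜 H F κ : Type*} [RCLike 𝕜] [NormedAddCommGroup H] [InnerProductSpace 𝕜 H]
  [NormedAddCommGroup F] [InnerProductSpace 𝕜 F]

theorem norm_map_le_of_map_basis_eq_smul [Fintype κ] (b : OrthonormalBasis κ 𝕜 H) {z : κ → F}
    (hz : Orthonormal 𝕜 z) {L : H →ₗ[𝕜] F} {a : κ → 𝕜} (hL : ∀ k, L (b k) = a k • z k) {C : ℝ}
    (hC : 0 ≤ C) (ha : ∀ k, ‖a k‖ ≤ C) (y : H) : ‖L y‖ ≤ C * ‖y‖ := by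
  have hLy : L y = ∑ k, (inner 𝕜 (b k) y * a k) • z k := by
    conv_lhs => rw [← b.sum_repr' y]
    simp only [map_sum, map_smul, hL, smul_smul]
  have hpyth : ‖L y‖ ^ 2 = ∑ k, ‖inner 𝕜 (b k) y * a k‖ ^ 2 := by
    rw [hLy]
    simpa only [LinearIsometry.toSpanSingleton_apply] using
      hz.orthogonalFamily.norm_sum (fun k => inner 𝕜 (b k) y * a k) Finset.univ
  refine le_of_sq_le_sq ?_ (by positivity)
  rw [hpyth, mul_pow, ← b.sum_sq_norm_inner_right, Finset.mul_sum]
  gcongr with k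
  rw [norm_mul, mul_pow, mul_comm]
  gcongr
  exact ha k

variable [FiniteDimensional 𝕜 H] [FiniteDimensional 𝕜 F]

theorem exists_orthonormalBasis_pairwise_inner_map_eq_zero (T : H →ₗ[𝕜] F) :
    ∃ b : OrthonormalBasis (Fin (Module.finrank 𝕜 H)) 𝕜 H,
      ∀ k l, k ≠ l → inner 𝕜 (T (b k)) (T (b l)) = 0 := by
  have hT := T.isPositive_adjoint_comp_self.isSymmetric
  refine ⟨hT.eigenvectorBasis rfl, fun k l hkl => ?_⟩
  rw [← LinearMap.adjoint_inner_right, ← LinearMap.comp_apply, hT.apply_eigenvectorBasis rfl l,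
    inner_smul_right, (hT.eigenvectorBasis rfl).orthonormal.2 hkl, mul_zero]

theorem exists_linearIsometry_norm_sub_smul_le (T : H →ₗ[𝕜] F) {c η : ℝ} (hη : 0 ≤ η)
    (hηc : η < c) (hT : ∀ y, |‖T y‖ ^ 2 - c * ‖y‖ ^ 2| ≤ η * ‖y‖ ^ 2) :
    ∃ g : H →ₗᵢ[𝕜] F, ∀ y, ‖T y - ((√c : ℝ) : 𝕜) • g y‖ ≤ η / √c * ‖y‖ := by
  obtain ⟨b, hb⟩ := exists_orthonormalBasis_pairwise_inner_map_eq_zero T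
  have hsq : ∀ k, |‖T (b k)‖ ^ 2 - c| ≤ η := fun k => by simpa using hT (b k)
  have hne : ∀ k, ‖T (b k)‖ ≠ 0 := fun k h0 => by
    have := (abs_le.mp (hsq k)).1
    rw [h0] at this
    linarith
  let z : Fin (Module.finrank 𝕜 H) → F := fun k => ((‖T (b k)‖⁻¹ : ℝ) : 𝕜) • T (b k)
  have hz : Orthonormal 𝕜 z := by
    refine ⟨fun k => ?_, fun k l hkl => ?_⟩
    · simp only [z, norm_smul, RCLike.norm_ofReal, abs_inv, abs_norm, inv_mul_cancel₀ (hne k)]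
    · simp only [z, inner_smul_left, inner_smul_right, hb k l hkl, mul_zero]
  let g : H →ₗ[𝕜] F := b.toBasis.constr 𝕜 z
  have hg : ∀ k, g (b k) = z k := fun k => by
    simp only [g, ← b.coe_toBasis, Module.Basis.constr_basis]
  have hdiff : ∀ k, (T - ((√c : ℝ) : 𝕜) • g) (b k) = ((‖T (b k)‖ - √c : ℝ) : 𝕜) • z k := by
    intro k
    have hTz : T (b k) = (‖T (b k)‖ : 𝕜) • z k := by
      rw [smul_smul, ← RCLike.ofReal_mul, mul_inv_cancel₀ (hne k), RCLike.ofReal_one, one_smul]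
    rw [LinearMap.sub_apply, LinearMap.smul_apply, hg, RCLike.ofReal_sub, sub_smul, ← hTz]
  refine ⟨g.isometryOfOrthonormal (v := b.toBasis) (by simp) ?_,
    norm_map_le_of_map_basis_eq_smul b hz hdiff (by positivity) fun k => ?_⟩
  · rwa [b.coe_toBasis, show g ∘ b = z from funext hg]
  · rw [RCLike.norm_ofReal]
    exact abs_sub_sqrt_le (norm_nonneg _) (by linarith) (hsq k)

end Polar

section Simplex

open Matrix WithLp Module
open scoped Matrix.Norms.Frobenius

/-- The Gram matrix of the vertices of a regular simplex inscribed in the unit sphere of a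
`d`-dimensional space; it is meant for index types with `d + 1` elements. -/
noncomputable def simplexGram (ι : Type*) [DecidableEq ι] (d : ℕ) : Matrix ι ι ℝ :=
  of fun i j => if i = j then 1 else -1 / (d : ℝ)

/-- The hyperplane of vectors with zero coordinate sum, encoded as an orthogonal complement. -/
noncomputable def zeroSum (ι : Type*) [Fintype ι] : Submodule ℝ (EuclideanSpace ℝ ι) :=
  (ℝ ∙ toLp 2 (1 : ι → ℝ))ᗮ

/-- The synthesis operator `y ↦ ∑ i, y i • u i` of a finite family of vectors. -/
noncomputable def synthesis {ι E : Type*} [Fintype ι] [AddCommGroup E] [Module ℝ E]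
    (u : ι → E) : EuclideanSpace ℝ ι →ₗ[ℝ] E :=
  Fintype.linearCombination ℝ u ∘ₗ (WithLp.linearEquiv 2 ℝ (ι → ℝ)).toLinearMap

variable {ι E : Type*} [Fintype ι] [NormedAddCommGroup E] [InnerProductSpace ℝ E]

theorem mem_zeroSum {y : EuclideanSpace ℝ ι} : y ∈ zeroSum ι ↔ ∑ i, y i = 0 := by
  simp [zeroSum, Submodule.mem_orthogonal_singleton_iff_inner_right, PiLp.inner_apply]

theorem finrank_zeroSum {d : ℕ} (hι : Fintype.card ι = d + 1) : finrank ℝ (zeroSum ι) = d := by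
  have : Fact (finrank ℝ (EuclideanSpace ℝ ι) = d + 1) := ⟨by simpa using hι⟩
  have : Nonempty ι := Fintype.card_pos_iff.mp (by lia)
  exact Submodule.finrank_orthogonal_span_singleton (by simp)

theorem synthesis_apply (u : ι → E) (y : EuclideanSpace ℝ ι) :
    synthesis u y = ∑ i, y i • u i := rfl

theorem inner_synthesis (u : ι → E) (x y : EuclideanSpace ℝ ι) :
    ⟪synthesis u x, synthesis u y⟫ = x ⬝ᵥ gram ℝ u *ᵥ y := by
  rw [← star_trivial (ofLp x), star_dotProduct_gram_mulVec, synthesis_apply, synthesis_apply]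

variable [DecidableEq ι]

theorem simplexGram_mulVec (d : ℕ) (y : ι → ℝ) :
    simplexGram ι d *ᵥ y = (1 + 1 / (d : ℝ)) • y - fun _ => (∑ i, y i) / d := by
  have hsplit : simplexGram ι d = (1 + 1 / (d : ℝ)) • 1 - of fun _ _ => 1 / (d : ℝ) := by
    ext i j
    by_cases h : i = j <;> simp [simplexGram, h, neg_div]
  rw [hsplit, sub_mulVec, smul_mulVec, one_mulVec]
  ext i
  simp [mulVec, dotProduct, div_eq_inv_mul, Finset.mul_sum]

/-- The vertices of the standard simplex of `ℝ^ι`, translated so that their centroid is `0`. -/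
noncomputable def centeredVertex (i : ι) : zeroSum ι :=
  ⟨EuclideanSpace.single i 1 - toLp 2 fun _ => (Fintype.card ι : ℝ)⁻¹, by
    have : Nonempty ι := ⟨i⟩
    simp [mem_zeroSum]⟩

theorem inner_centeredVertex_left (i : ι) (y : zeroSum ι) :
    ⟪centeredVertex i, y⟫ = (y : EuclideanSpace ℝ ι) i := by
  have hconst : ⟪toLp 2 fun _ => (Fintype.card ι : ℝ)⁻¹, (y : EuclideanSpace ℝ ι)⟫ = 0 := by
    simp only [PiLp.inner_apply, RCLike.inner_apply, conj_trivial, ← Finset.sum_mul,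
      mem_zeroSum.mp y.2, zero_mul]
  rw [Submodule.coe_inner, centeredVertex, inner_sub_left, hconst, sub_zero,
    EuclideanSpace.inner_single_left, map_one, one_mul]

theorem inner_centeredVertex (i j : ι) :
    ⟪centeredVertex i, centeredVertex j⟫ = (if i = j then 1 else 0) - (Fintype.card ι : ℝ)⁻¹ := by
  rw [inner_centeredVertex_left]
  simp [centeredVertex, PiLp.single_apply]

theorem norm_centeredVertex_le_one (i : ι) : ‖centeredVertex i‖ ≤ 1 := by
  rw [← sq_le_one_iff₀ (norm_nonneg _), ← real_inner_self_eq_norm_sq, inner_centeredVertex,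
    if_pos rfl]
  exact sub_le_self 1 (by positivity)

theorem synthesis_centeredVertex (u : ι → E) (i : ι) :
    synthesis u (centeredVertex i) = u i - (Fintype.card ι : ℝ)⁻¹ • ∑ j, u j := by
  simp [synthesis_apply, centeredVertex, sub_smul, Finset.smul_sum]

theorem abs_inner_synthesis_sub_le (u : ι → E) (d : ℕ) (x : EuclideanSpace ℝ ι)
    {y : EuclideanSpace ℝ ι} (hy : y ∈ zeroSum ι) :
    |⟪synthesis u x, synthesis u y⟫ - (1 + 1 / (d : ℝ)) * ⟪x, y⟫|
      ≤ ‖gram ℝ u - simplexGram ι d‖ * ‖x‖ * ‖y‖ := by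
  have hsimplex : x ⬝ᵥ simplexGram ι d *ᵥ y = (1 + 1 / (d : ℝ)) * ⟪x, y⟫ := by
    rw [simplexGram_mulVec, mem_zeroSum.mp hy, real_inner_comm]
    simp [EuclideanSpace.inner_eq_star_dotProduct, dotProduct, Finset.mul_sum, mul_left_comm]
  rw [inner_synthesis, ← hsimplex, ← dotProduct_sub, ← sub_mulVec]
  exact abs_dotProduct_mulVec_le_frobenius _ x y

theorem abs_norm_synthesis_sq_sub_le (u : ι → E) (d : ℕ) (y : zeroSum ι) :
    |‖synthesis u y‖ ^ 2 - (1 + 1 / (d : ℝ)) * ‖y‖ ^ 2|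
      ≤ ‖gram ℝ u - simplexGram ι d‖ * ‖y‖ ^ 2 := by
  simpa only [real_inner_self_eq_norm_sq, mul_assoc, ← sq, Submodule.coe_norm] using
    abs_inner_synthesis_sub_le u d y y.2

theorem gram_smul_linearIsometry_centeredVertex {d : ℕ} (hd : d ≠ 0)
    (hι : Fintype.card ι = d + 1) (g : zeroSum ι →ₗᵢ[ℝ] E) :
    gram ℝ (fun i => √(1 + 1 / (d : ℝ)) • g (centeredVertex i)) = simplexGram ι d := by
  have hc : √(1 + 1 / (d : ℝ)) * √(1 + 1 / (d : ℝ)) = 1 + 1 / (d : ℝ) :=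
    Real.mul_self_sqrt (by positivity)
  ext i j
  rw [gram_apply, real_inner_smul_left, real_inner_smul_right, g.inner_map_map,
    inner_centeredVertex, hι, ← mul_assoc, hc, simplexGram, of_apply]
  push_cast
  split_ifs <;> field_simp <;> ring

theorem norm_le_sqrt_mul_norm_synthesis {d : ℕ} (hd : d ≠ 0) {u : ι → E}
    (hgram : ‖gram ℝ u - simplexGram ι d‖ ≤ 1) (y : zeroSum ι) : ‖y‖ ≤ √d * ‖synthesis u y‖ := by
  have hbound := (abs_le.mp (abs_norm_synthesis_sq_sub_le u d y)).1
  have hlower : 1 / (d : ℝ) * ‖y‖ ^ 2 ≤ ‖synthesis u y‖ ^ 2 := by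
    nlinarith [mul_le_mul_of_nonneg_right hgram (sq_nonneg ‖y‖)]
  refine le_of_sq_le_sq ?_ (by positivity)
  rwa [mul_pow, Real.sq_sqrt (by positivity), ← div_le_iff₀' (by positivity), div_eq_inv_mul,
    ← one_div]

theorem sum_sum_simplexGram {d : ℕ} (hd : d ≠ 0) (hι : Fintype.card ι = d + 1) :
    ∑ i, ∑ j, simplexGram ι d i j = 0 := by
  have hrow : simplexGram ι d *ᵥ 1 = 0 := by
    ext i
    have hcard : (∑ i, (1 : ι → ℝ) i) = d + 1 := by simp [hι]
    rw [simplexGram_mulVec, hcard, Pi.sub_apply, Pi.smul_apply, Pi.one_apply, Pi.zero_apply,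
      smul_eq_mul]
    field_simp
    ring
  refine Finset.sum_eq_zero fun i _ => ?_
  simpa [mulVec, dotProduct] using congrFun hrow i

theorem norm_gram_sub_simplexGram_le {d : ℕ} (hd : d ≠ 0) (hι : Fintype.card ι = d + 1) {θ : ℝ}
    (hθ : 0 ≤ θ) {u : ι → E} (hu : ∀ i, ‖u i‖ = 1)
    (hdist : Pairwise fun i j => Real.arccos (-1 / (d : ℝ)) - θ ≤ Real.arccos ⟪u i, u j⟫) :
    ‖gram ℝ u - simplexGram ι d‖ ≤ (d + 1) ^ 2 * θ := by
  have hd1 : |-1 / (d : ℝ)| ≤ 1 := by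
    rw [abs_div, abs_neg, abs_one, Nat.abs_cast]
    exact div_le_one_of_le₀ (Nat.one_le_cast.mpr (Nat.pos_of_ne_zero hd)) (by positivity)
  have hentry : ∀ i j, (gram ℝ u - simplexGram ι d) i j ≤ θ := by
    intro i j
    rw [Matrix.sub_apply, gram_apply, simplexGram, of_apply]
    split_ifs with h
    · simpa [h, hu] using hθ
    · have hij : |⟪u i, u j⟫| ≤ 1 := by simpa [hu] using abs_real_inner_le_norm (u i) (u j)
      exact sub_le_iff_le_add'.mpr (le_add_of_arccos_sub_le_arccos hd1 hij hθ (hdist h))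
  have hsum : 0 ≤ ∑ i, ∑ j, (gram ℝ u - simplexGram ι d) i j := by
    simp only [Matrix.sub_apply, Finset.sum_sub_distrib, sum_sum_simplexGram hd hι, sub_zero,
      gram_apply, ← inner_sum, ← sum_inner]
    exact real_inner_self_nonneg
  simpa [hι, sq] using frobenius_norm_le_of_sum_nonneg hentry hsum

variable [FiniteDimensional ℝ E]

theorem surjective_synthesis_domRestrict_zeroSum {d : ℕ} (hd : d ≠ 0)
    (hι : Fintype.card ι = d + 1) (hE : finrank ℝ E = d) {u : ι → E}
    (hgram : ‖gram ℝ u - simplexGram ι d‖ ≤ 1) :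
    Function.Surjective ((synthesis u).domRestrict (zeroSum ι)) := by
  have hrank : finrank ℝ (zeroSum ι) = finrank ℝ E := (finrank_zeroSum hι).trans hE.symm
  rw [← LinearMap.injective_iff_surjective_of_finrank_eq_finrank hrank, injective_iff_map_eq_zero]
  intro y hy
  rw [LinearMap.domRestrict_apply] at hy
  simpa [hy] using norm_le_sqrt_mul_norm_synthesis hd hgram y

-- The centroid is a combination of the `u i` with zero coefficient sum, and the synthesis operator
-- almost preserves the orthogonality of such coefficients to the constant vector.
theorem norm_sum_le_mul_norm_gram_sub_simplexGram {d : ℕ} (hd : d ≠ 0)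
    (hι : Fintype.card ι = d + 1) (hE : finrank ℝ E = d) {u : ι → E}
    (hgram : ‖gram ℝ u - simplexGram ι d‖ ≤ 1) :
    ‖∑ i, u i‖ ≤ (d + 1) * ‖gram ℝ u - simplexGram ι d‖ := by
  set η := ‖gram ℝ u - simplexGram ι d‖
  set s := ∑ i, u i with hs
  let x : EuclideanSpace ℝ ι := toLp 2 1
  have hxs : synthesis u x = s := by simp [synthesis_apply, x, hs]
  have hx : ‖x‖ = √(d + 1) := by simp [x, EuclideanSpace.norm_eq, hι]
  obtain ⟨y, hys : synthesis u y = s⟩ := surjective_synthesis_domRestrict_zeroSum hd hι hE hgram s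
  have hxy : ⟪x, (y : EuclideanSpace ℝ ι)⟫ = 0 :=
    Submodule.mem_orthogonal_singleton_iff_inner_right.mp y.2
  have hinner : ‖s‖ ^ 2 ≤ η * √(d + 1) * ‖y‖ := by
    have h := abs_inner_synthesis_sub_le u d x y.2
    rwa [hxs, hys, hxy, mul_zero, sub_zero, real_inner_self_eq_norm_sq, abs_sq, hx] at h
  have hy : ‖y‖ ≤ √(d + 1) * ‖s‖ := by
    refine (norm_le_sqrt_mul_norm_synthesis hd hgram y).trans ?_
    rw [hys]
    gcongr
    exact le_add_of_nonneg_right zero_le_one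
  have hprod : ‖s‖ * ‖s‖ ≤ (d + 1) * η * ‖s‖ := by
    calc ‖s‖ * ‖s‖ ≤ η * √(d + 1) * (√(d + 1) * ‖s‖) := by
          rw [← sq]; exact hinner.trans (by gcongr)
      _ = √(d + 1) * √(d + 1) * η * ‖s‖ := by ring
      _ = (d + 1) * η * ‖s‖ := by rw [Real.mul_self_sqrt (by positivity)]
  rcases (norm_nonneg s).eq_or_lt with h0 | hpos
  · rw [← h0]; positivity
  · exact le_of_mul_le_mul_right hprod hpos

theorem exists_gram_eq_simplexGram_norm_sub_centroid_sub_le {d : ℕ} (hd : d ≠ 0)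
    (hι : Fintype.card ι = d + 1) {u : ι → E} (hgram : ‖gram ℝ u - simplexGram ι d‖ ≤ 1) :
    ∃ v : ι → E, gram ℝ v = simplexGram ι d ∧
      ∀ i, ‖u i - (Fintype.card ι : ℝ)⁻¹ • ∑ j, u j - v i‖ ≤ ‖gram ℝ u - simplexGram ι d‖ := by
  set η := ‖gram ℝ u - simplexGram ι d‖
  set c : ℝ := 1 + 1 / (d : ℝ)
  have hc : 1 < c := lt_add_of_pos_right 1 (by positivity)
  obtain ⟨g, hg⟩ := exists_linearIsometry_norm_sub_smul_le ((synthesis u).domRestrict (zeroSum ι))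
    (norm_nonneg _) (hgram.trans_lt hc) (abs_norm_synthesis_sq_sub_le u d)
  refine ⟨fun i => √c • g (centeredVertex i),
    gram_smul_linearIsometry_centeredVertex hd hι g, fun i => ?_⟩
  calc ‖u i - (Fintype.card ι : ℝ)⁻¹ • ∑ j, u j - √c • g (centeredVertex i)‖
      ≤ η / √c * ‖centeredVertex i‖ := by
        simpa only [LinearMap.domRestrict_apply, synthesis_centeredVertex,
          RCLike.ofReal_real_eq_id, id_eq] using hg (centeredVertex i)
    _ ≤ η * 1 := by
        gcongr
        · exact div_le_self (norm_nonneg _) (Real.one_le_sqrt.mpr hc.le)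
        · exact norm_centeredVertex_le_one i
    _ = η := mul_one η

theorem exists_gram_eq_simplexGram_norm_sub_le {d : ℕ} (hd : d ≠ 0)
    (hι : Fintype.card ι = d + 1) (hE : finrank ℝ E = d) {u : ι → E}
    (hgram : ‖gram ℝ u - simplexGram ι d‖ ≤ 1) :
    ∃ v : ι → E, gram ℝ v = simplexGram ι d ∧
      ∀ i, ‖u i - v i‖ ≤ 2 * ‖gram ℝ u - simplexGram ι d‖ := by
  obtain ⟨v, hv, huv⟩ := exists_gram_eq_simplexGram_norm_sub_centroid_sub_le hd hι hgram
  refine ⟨v, hv, fun i => ?_⟩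
  have hcentroid : ‖(Fintype.card ι : ℝ)⁻¹ • ∑ j, u j‖ ≤ ‖gram ℝ u - simplexGram ι d‖ := by
    rw [norm_smul, norm_inv, Real.norm_natCast, inv_mul_le_iff₀ (by rw [hι]; positivity), hι,
      Nat.cast_succ]
    exact norm_sum_le_mul_norm_gram_sub_simplexGram hd hι hE hgram
  calc ‖u i - v i‖
      = ‖(u i - (Fintype.card ι : ℝ)⁻¹ • ∑ j, u j - v i) + (Fintype.card ι : ℝ)⁻¹ • ∑ j, u j‖ := by
        congr 1; abel
    _ ≤ 2 * ‖gram ℝ u - simplexGram ι d‖ := by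
        rw [two_mul]; exact norm_add_le_of_le (huv i) hcentroid

end Simplex

theorem simplex_stability_general {ι E : Type*} [Fintype ι] [NormedAddCommGroup E]
    [InnerProductSpace ℝ E] [FiniteDimensional ℝ E] {d : ℕ} (hE : Module.finrank ℝ E = d)
    (hι : Fintype.card ι = d + 1) {ε : ℝ} (hε0 : 0 ≤ ε) (hε1 : 2 * (d + 1) ^ 2 * ε ≤ 1)
    {u : ι → E} (hu : ∀ i, ‖u i‖ = 1)
    (hdist : ∀ i j, i ≠ j →
      Real.arccos (-1 / (d : ℝ)) - 2 * ε ≤ Real.arccos ⟪u i, u j⟫) :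
    ∃ v : ι → E,
      (∀ i, ‖v i‖ = 1) ∧
      (∀ i j, i ≠ j → ⟪v i, v j⟫ = -1 / (d : ℝ)) ∧
      (∀ i, Real.arccos ⟪u i, v i⟫ ≤ 2 * Real.pi * (d + 1) ^ 2 * ε) := by
  classical
  have hd : d ≠ 0 := by
    obtain ⟨i⟩ : Nonempty ι := Fintype.card_pos_iff.mp (by lia)
    have hui : u i ≠ 0 := norm_ne_zero_iff.mp (by simp [hu i])
    exact hE ▸ (Module.finrank_pos_iff_exists_ne_zero (R := ℝ).mpr ⟨u i, hui⟩).ne'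
  have hgram := norm_gram_sub_simplexGram_le hd hι (by positivity) hu hdist
  obtain ⟨v, hv, huv⟩ :=
    exists_gram_eq_simplexGram_norm_sub_le hd hι hE (hgram.trans (by linarith))
  have hinner : ∀ i j, ⟪v i, v j⟫ = simplexGram ι d i j := fun i j => by
    rw [← hv, Matrix.gram_apply]
  have hv1 : ∀ i, ‖v i‖ = 1 := fun i => by
    rw [norm_eq_sqrt_real_inner (v i), hinner, simplexGram, Matrix.of_apply, if_pos rfl,
      Real.sqrt_one]
  refine ⟨v, hv1, fun i j hij => by simp [hinner, simplexGram, hij], fun i => ?_⟩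
  calc Real.arccos ⟪u i, v i⟫ ≤ Real.pi / 2 * ‖u i - v i‖ :=
        arccos_inner_le_pi_div_two_mul_norm_sub (hu i) (hv1 i)
    _ ≤ Real.pi / 2 * (2 * ((d + 1) ^ 2 * (2 * ε))) := by
        gcongr; exact (huv i).trans (by gcongr)
    _ = 2 * Real.pi * (d + 1) ^ 2 * ε := by ring

/-- Stability of the regular simplex: if `d+1` unit vectors in `ℝ^d` have pairwise
spherical distances at least `arccos(-1/d) - 2ε` with `0 ≤ ε < 1/(9 d^{3.5})`, then
they are within spherical distance `9 d^{3.5} ε` of the vertices of a regular simplex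
inscribed in the unit sphere. -/
theorem simplex_stability (d : ℕ) (hd : 2 ≤ d) (ε : ℝ)
    (hε0 : 0 ≤ ε) (hε1 : ε < 1 / (9 * (d : ℝ) ^ (3.5 : ℝ)))
    (u : Fin (d + 1) → EuclideanSpace ℝ (Fin d))
    (hu : ∀ i, ‖u i‖ = 1)
    (hdist : ∀ i j : Fin (d + 1), i ≠ j →
      Real.arccos (-1 / (d : ℝ)) - 2 * ε ≤ Real.arccos ⟪u i, u j⟫) :
    ∃ v : Fin (d + 1) → EuclideanSpace ℝ (Fin d),
      (∀ i, ‖v i‖ = 1) ∧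
      (∀ i j : Fin (d + 1), i ≠ j → ⟪v i, v j⟫ = -1 / (d : ℝ)) ∧
      (∀ i, Real.arccos ⟪u i, v i⟫ ≤ 9 * (d : ℝ) ^ (3.5 : ℝ) * ε) := by
  have hbound : 2 * Real.pi * (d + 1) ^ 2 * ε ≤ 9 * (d : ℝ) ^ (3.5 : ℝ) * ε :=
    mul_le_mul_of_nonneg_right (two_mul_pi_mul_add_one_sq_le (by exact_mod_cast hd)) hε0
  have hsmall : 2 * (d + 1) ^ 2 * ε ≤ 1 := by
    have : 9 * (d : ℝ) ^ (3.5 : ℝ) * ε < 1 := by rwa [← lt_div_iff₀' (by positivity)]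
    nlinarith [Real.pi_gt_three, mul_nonneg (sq_nonneg (d + 1 : ℝ)) hε0]
  obtain ⟨v, hv, hvv, huv⟩ := simplex_stability_general (E := EuclideanSpace ℝ (Fin d))
    finrank_euclideanSpace_fin (Fintype.card_fin _) hε0 hsmall hu hdist
  exact ⟨v, hv, hvv, fun i => (huv i).trans hbound⟩
end

section
/- Let u_0, u_1, u_2 be unit vectors in ℝ² such that the spherical distance δ(u_i, u_j) ≥ 2π/3 − 2ε for all 0 ≤ i < j ≤ 2, where 0 ≤ ε < π/12. Then there exist unit vectors v_0, v_1, v_2 in ℝ² that are the vertices of a regular triangle inscribed in the unit circle (i.e. ⟨v_i, v_j⟩ = −1/2 for i ≠ j) such that δ(u_i, v_i) ≤ 3ε for i = 0, 1, 2. -/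
open scoped RealInnerProductSpace

/-!
Cut the circle at the antipode of `u 0` and sort the three points by angle. The spherical distance
of two points is at most the length of any arc between them, so the three arcs between cyclically
consecutive points have length at least `2π/3 - δ`, and they add up to `2π`. Subtracting the angles
`2πk/3` from the sorted angles therefore leaves three numbers within `δ` of their mean; turn the
regular triangle by this mean.
-/

section Real

open Real

lemma arccos_cos_le_abs (x : ℝ) : arccos (cos x) ≤ |x| := by
  rcases le_total |x| π with hx | hx
  · rw [← cos_abs, arccos_cos (abs_nonneg x) hx]
  · exact (arccos_le_pi _).trans hx

lemma cos_two_pi_div_three : cos (2 * π / 3) = -1 / 2 := by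
  rw [show 2 * π / 3 = π - π / 3 by ring, cos_pi_sub, cos_pi_div_three, neg_div]

lemma cos_sub_mul_two_pi_div_three {k l : Fin 3} (hkl : k ≠ l) :
    cos ((k - l : ℝ) * (2 * π / 3)) = -1 / 2 := by
  have cos_two_mul_two_pi_div_three : cos (2 * (2 * π / 3)) = -1 / 2 := by
    rw [cos_two_mul, cos_two_pi_div_three]
    norm_num
  rw [← cos_abs, abs_mul, abs_of_pos (by positivity : 0 < 2 * π / 3)]
  fin_cases k <;> fin_cases l <;> first
    | exact absurd rfl hkl
    | norm_num [cos_two_pi_div_three, cos_two_mul_two_pi_div_three]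

lemma exists_abs_add_mul_div_three_sub_le {L δ : ℝ} {t : Fin 3 → ℝ}
    (h01 : L / 3 - δ ≤ t 1 - t 0) (h12 : L / 3 - δ ≤ t 2 - t 1)
    (h20 : L / 3 - δ ≤ t 0 + L - t 2) :
    ∃ c : ℝ, ∀ k : Fin 3, |c + k * (L / 3) - t k| ≤ δ := by
  refine ⟨(t 0 + t 1 + t 2 - L) / 3, fun k ↦ abs_le.2 ?_⟩
  match k with
  | 0 | 1 | 2 => norm_num; constructor <;> linarith

end Real

section Plane

open Real Module

variable {V : Type*} [NormedAddCommGroup V] [InnerProductSpace ℝ V] [Fact (finrank ℝ V = 2)]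
  (o : Orientation ℝ V (Fin 2))

lemma inner_rotation_rotation (x : V) (α β : Angle) :
    ⟪o.rotation α x, o.rotation β x⟫ = ‖x‖ ^ 2 * (β - α).cos := by
  rcases eq_or_ne x 0 with rfl | hx
  · simp
  · have rotation_ne_zero (γ : Angle) : o.rotation γ x ≠ 0 := by simpa using hx
    rw [o.inner_eq_norm_mul_norm_mul_cos_oangle, LinearIsometryEquiv.norm_map,
      LinearIsometryEquiv.norm_map, o.oangle_rotation_left hx (rotation_ne_zero β),
      o.oangle_rotation_self_right hx, sq]

lemma arccos_inner_rotation_le {e : V} (he : ‖e‖ = 1) (a b : ℝ) :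
    arccos ⟪o.rotation a e, o.rotation b e⟫ ≤ |b - a| := by
  rw [inner_rotation_rotation, he, one_pow, one_mul, ← Angle.coe_sub, Angle.cos_coe]
  exact arccos_cos_le_abs (b - a)

lemma exists_perm_monotone_eq_rotation {n : ℕ} {e : V} {u : Fin n → V} (hu : ∀ i, ‖u i‖ = ‖e‖) :
    ∃ (σ : Equiv.Perm (Fin n)) (t : Fin n → ℝ), Monotone t ∧ (∀ k, t k ∈ Set.Ioc (-π) π) ∧
      ∀ k, u (σ k) = o.rotation (t k) e := by
  let angle : Fin n → ℝ := fun i ↦ (o.oangle e (u i)).toReal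
  refine ⟨Tuple.sort angle, angle ∘ Tuple.sort angle, Tuple.monotone_sort angle,
    fun k ↦ Angle.toReal_mem_Ioc _, fun k ↦ ?_⟩
  rw [Function.comp_apply, Angle.coe_toReal, (o.rotation_oangle_eq_iff_norm_eq _ _).2 (hu _).symm]

/-- The vertices, in positive order, of the regular triangle centred at the origin whose vertex of
index `0` is `e` turned by the angle `c`. -/
noncomputable def regularTriangle (e : V) (c : ℝ) (k : Fin 3) : V :=
  o.rotation (c + k * (2 * π / 3) : ℝ) e

lemma norm_regularTriangle (e : V) (c : ℝ) (k : Fin 3) : ‖regularTriangle o e c k‖ = ‖e‖ :=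
  (o.rotation _).norm_map e

lemma inner_regularTriangle (e : V) (c : ℝ) {k l : Fin 3} (hkl : k ≠ l) :
    ⟪regularTriangle o e c k, regularTriangle o e c l⟫ = ‖e‖ ^ 2 * (-1 / 2) := by
  rw [regularTriangle, regularTriangle, inner_rotation_rotation, ← Angle.coe_sub, Angle.cos_coe,
    add_sub_add_left_eq_sub, ← sub_mul, cos_sub_mul_two_pi_div_three hkl.symm]

lemma exists_arccos_inner_regularTriangle_le {e : V} (he : ‖e‖ = 1) {δ : ℝ} {t : Fin 3 → ℝ}
    (ht : Monotone t) (ht_mem : ∀ k, t k ∈ Set.Ioc (-π) π)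
    (hdist : ∀ k l, k ≠ l →
      2 * π / 3 - δ ≤ arccos ⟪o.rotation (t k) e, o.rotation (t l) e⟫) :
    ∃ c : ℝ, ∀ k, arccos ⟪o.rotation (t k) e, regularTriangle o e c k⟫ ≤ δ := by
  have arc_ge {k l : Fin 3} (hkl : k < l) : 2 * π / 3 - δ ≤ t l - t k := by
    rw [← abs_of_nonneg (sub_nonneg.2 (ht hkl.le))]
    exact (hdist k l hkl.ne).trans (arccos_inner_rotation_le o he _ _)
  have wrapping_arc_ge : 2 * π / 3 - δ ≤ t 0 + 2 * π - t 2 := by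
    have wrapping_arc_nonneg : 0 ≤ t 0 + 2 * π - t 2 := by
      linarith [(ht_mem 0).1, (ht_mem 2).2]
    rw [← abs_of_nonneg wrapping_arc_nonneg]
    refine (hdist 2 0 (by decide)).trans ?_
    simpa only [Angle.coe_add, Angle.coe_two_pi, add_zero] using
      arccos_inner_rotation_le o he (t 2) (t 0 + 2 * π)
  obtain ⟨c, hc⟩ := exists_abs_add_mul_div_three_sub_le (arc_ge (by decide : (0 : Fin 3) < 1))
    (arc_ge (by decide : (1 : Fin 3) < 2)) wrapping_arc_ge
  exact ⟨c, fun k ↦ (arccos_inner_rotation_le o he _ _).trans (hc k)⟩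

theorem triangle_stability_general (δ : ℝ) (u : Fin 3 → V) (hu : ∀ i, ‖u i‖ = 1)
    (hdist : ∀ i j : Fin 3, i ≠ j → 2 * π / 3 - δ ≤ arccos ⟪u i, u j⟫) :
    ∃ v : Fin 3 → V,
      (∀ i, ‖v i‖ = 1) ∧
      (∀ i j : Fin 3, i ≠ j → ⟪v i, v j⟫ = -1 / 2) ∧
      (∀ i, arccos ⟪u i, v i⟫ ≤ δ) := by
  have := FiniteDimensional.of_fact_finrank_eq_two (K := ℝ) (V := V)
  let o : Orientation ℝ V (Fin 2) := (finBasisOfFinrankEq ℝ V Fact.out).orientation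
  obtain ⟨σ, t, ht, ht_mem, hut⟩ := exists_perm_monotone_eq_rotation o (e := u 0)
    fun i ↦ (hu i).trans (hu 0).symm
  obtain ⟨c, hc⟩ := exists_arccos_inner_regularTriangle_le o (hu 0) ht ht_mem fun k l hkl ↦ by
    simpa only [hut] using hdist (σ k) (σ l) (σ.injective.ne hkl)
  refine ⟨regularTriangle o (u 0) c ∘ σ.symm, fun i ↦ ?_, fun i j hij ↦ ?_, fun i ↦ ?_⟩
  · exact (norm_regularTriangle o _ _ _).trans (hu 0)
  · rw [Function.comp_apply, Function.comp_apply,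
      inner_regularTriangle o _ _ (σ.symm.injective.ne hij), hu 0, one_pow, one_mul]
  · simpa only [← hut, σ.apply_symm_apply, Function.comp_apply] using hc (σ.symm i)

end Plane

/-- Stability of the regular triangle on the circle: if three unit vectors in `ℝ²` have
pairwise spherical distances at least `2π/3 - 2ε` with `0 ≤ ε < π/12`, then they are
within spherical distance `3ε` of the vertices of a regular triangle inscribed in the
unit circle. -/
theorem triangle_stability (ε : ℝ) (hε0 : 0 ≤ ε) (hε1 : ε < Real.pi / 12)
    (u : Fin 3 → EuclideanSpace ℝ (Fin 2))
    (hu : ∀ i, ‖u i‖ = 1)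
    (hdist : ∀ i j : Fin 3, i ≠ j →
      2 * Real.pi / 3 - 2 * ε ≤ Real.arccos ⟪u i, u j⟫) :
    ∃ v : Fin 3 → EuclideanSpace ℝ (Fin 2),
      (∀ i, ‖v i‖ = 1) ∧
      (∀ i j : Fin 3, i ≠ j → ⟪v i, v j⟫ = -1 / 2) ∧
      (∀ i, Real.arccos ⟪u i, v i⟫ ≤ 3 * ε) := by
  have : Fact (Module.finrank ℝ (EuclideanSpace ℝ (Fin 2)) = 2) := ⟨finrank_euclideanSpace_fin⟩
  obtain ⟨v, hv, hinner, hclose⟩ := triangle_stability_general (2 * ε) u hu hdist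
  exact ⟨v, hv, hinner, fun i ↦ (hclose i).trans (by linarith)⟩
end

section
/- Let φ_I = (1/2)·arccos(1/√5), let 0 ≤ ε < 10⁻⁹, and let x_1, …, x_k be unit vectors in ℝ³ with k ≥ 12 such that the spherical distance δ(x_i, x_j) ≥ 2(φ_I − ε) for all i ≠ j. Then k = 12, and there exist unit vectors w_1, …, w_12 in ℝ³ forming the vertex set of a regular icosahedron inscribed in the unit sphere (i.e. for all i ≠ j, ⟨w_i, w_j⟩ ∈ {1/√5, −1/√5, −1}) such that δ(x_i, w_i) ≤ c·ε for all i, where c = 44⁹ · 25 · 10⁷. -/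
open scoped RealInnerProductSpace

/-
Every sum `∑ i, ∑ j, P ⟪x i, x j⟫` of a Legendre polynomial `P` is nonnegative. Expanding the
test polynomial `(t + 1) (t + s) ^ 2 (t - s)`, `s = 1 / √5`, accordingly gives Delsarte's linear
programming bound. It excludes more than twelve points, and for twelve points it forces all inner
products to be close to `s`, `-s` or `-1` and the frame potential to be almost minimal.

Rounding the inner products yields a matrix `G` with `G * G ≈ 4 • G`. The entries of
`G * G - 4 • G` vary in a discrete set, so `G * G = 4 • G`, and `G` is the Gram matrix of an
icosahedron.

The double root of the test polynomial only controls inner products near `-s` up to `√δ`. Two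
vertices of the icosahedron at inner product `-s` have two adjacent common neighbours, and the
vanishing of the `4 × 4` Gram determinant of these points in `ℝ³` improves the error to `O(δ)`.
Since `G` belongs to a tight frame, projecting `x` to the range of `G` and rescaling along the
principal axes gives vectors with Gram matrix exactly `G` at distance `O(δ)` from `x`.
-/

section Determinant

variable {𝕜 : Type*} [NormedField 𝕜] {n : Type*}

theorem norm_prod_sub_prod_le (s : Finset n) {f g : n → 𝕜} {η : ℝ} (hf : ∀ i ∈ s, ‖f i‖ ≤ 1)
    (hg : ∀ i ∈ s, ‖g i‖ ≤ 1) (hfg : ∀ i ∈ s, ‖f i - g i‖ ≤ η) :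
    ‖∏ i ∈ s, f i - ∏ i ∈ s, g i‖ ≤ s.card * η := by
  classical
  induction s using Finset.induction_on with
  | empty => simp
  | insert a s ha ih =>
    rw [Finset.forall_mem_insert] at hf hg hfg
    have hprod : ‖∏ i ∈ s, f i‖ ≤ 1 := by
      rw [norm_prod]
      exact Finset.prod_le_one (fun i _ => norm_nonneg _) hf.2
    rw [Finset.prod_insert ha, Finset.prod_insert ha, Finset.card_insert_of_notMem ha]
    calc ‖f a * ∏ i ∈ s, f i - g a * ∏ i ∈ s, g i‖
        = ‖(f a - g a) * ∏ i ∈ s, f i + g a * (∏ i ∈ s, f i - ∏ i ∈ s, g i)‖ := by ring_nf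
      _ ≤ ‖f a - g a‖ * ‖∏ i ∈ s, f i‖ + ‖g a‖ * ‖∏ i ∈ s, f i - ∏ i ∈ s, g i‖ := by
        rw [← norm_mul, ← norm_mul]
        exact norm_add_le _ _
      _ ≤ η * 1 + 1 * (s.card * η) := by
        gcongr
        exacts [(norm_nonneg _).trans hfg.1, hfg.1, hg.1, ih hf.2 hg.2 hfg.2]
      _ = ((s.card + 1 : ℕ) : ℝ) * η := by push_cast; ring

theorem norm_det_sub_det_le [Fintype n] [DecidableEq n] {A B : Matrix n n 𝕜} {η : ℝ}
    (hA : ∀ i j, ‖A i j‖ ≤ 1) (hB : ∀ i j, ‖B i j‖ ≤ 1) (hAB : ∀ i j, ‖A i j - B i j‖ ≤ η) :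
    ‖A.det - B.det‖ ≤ (Fintype.card n).factorial * (Fintype.card n * η) := by
  rw [Matrix.det_apply', Matrix.det_apply', ← Finset.sum_sub_distrib]
  have hterm (σ : Equiv.Perm n) : ‖(σ.sign : 𝕜) * ∏ i, A (σ i) i - (σ.sign : 𝕜) * ∏ i, B (σ i) i‖
      ≤ Fintype.card n * η := by
    have hsign : ‖((σ.sign : ℤ) : 𝕜)‖ = 1 := by
      rcases Int.units_eq_one_or σ.sign with h | h <;> simp [h]
    rw [← mul_sub, norm_mul, hsign, one_mul]
    exact norm_prod_sub_prod_le _ (fun i _ => hA _ i) (fun i _ => hB _ i) fun i _ => hAB _ i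
  refine (norm_sum_le_of_le _ fun σ _ => hterm σ).trans_eq ?_
  rw [Finset.sum_const, Finset.card_univ, Fintype.card_perm, nsmul_eq_mul]

end Determinant

section InnerProduct

variable {ι E : Type*} [NormedAddCommGroup E] [InnerProductSpace ℝ E]

theorem det_gram_eq_zero_of_finrank_lt [Fintype ι] [DecidableEq ι] [FiniteDimensional ℝ E]
    (x : ι → E) (h : Module.finrank ℝ E < Fintype.card ι) : (Matrix.gram ℝ x).det = 0 := by
  by_contra hdet
  exact h.not_ge
    (Matrix.det_gram_ne_zero_iff_linearIndependent.1 hdet).fintype_card_le_finrank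

theorem abs_inner_le_one {u v : E} (hu : ‖u‖ = 1) (hv : ‖v‖ = 1) : |⟪u, v⟫| ≤ 1 := by
  simpa [hu, hv] using abs_real_inner_le_norm u v

theorem arccos_inner_le_two_mul_norm_sub {u v : E} (hu : ‖u‖ = 1) (hv : ‖v‖ = 1) :
    Real.arccos ⟪u, v⟫ ≤ 2 * ‖u - v‖ := by
  have hinner := abs_le.1 (abs_inner_le_one hu hv)
  set θ := Real.arccos ⟪u, v⟫ with hθ
  have hθ0 : 0 ≤ θ := Real.arccos_nonneg _
  have hchord : ‖u - v‖ ^ 2 = 2 - 2 * Real.cos θ := by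
    rw [hθ, Real.cos_arccos hinner.1 hinner.2, norm_sub_sq_real, hu, hv]
    ring
  have hcos : Real.cos θ ≤ 1 - 2 / Real.pi ^ 2 * θ ^ 2 :=
    Real.cos_le_one_sub_mul_cos_sq (by rw [abs_of_nonneg hθ0]; exact Real.arccos_le_pi _)
  have hpi : 1 / 8 ≤ 2 / Real.pi ^ 2 := by
    rw [div_le_div_iff₀ (by norm_num) (by positivity)]
    nlinarith [Real.pi_le_four, Real.pi_pos]
  refine abs_le_of_sq_le_sq' ?_ (by positivity) |>.2
  nlinarith [mul_le_mul_of_nonneg_right hpi (sq_nonneg θ)]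

end InnerProduct

theorem le_add_of_arccos_sub_le_arccos_s3 {a t ρ : ℝ} (ha : |a| ≤ 1) (ht : |t| ≤ 1) (hρ : 0 ≤ ρ)
    (h : Real.arccos a - ρ ≤ Real.arccos t) : t ≤ a + ρ := by
  rw [abs_le] at ha ht
  rcases le_total t a with hta | hat
  · linarith
  · have hcos := Real.abs_cos_sub_cos_le (Real.arccos t) (Real.arccos a)
    rw [Real.cos_arccos ht.1 ht.2, Real.cos_arccos ha.1 ha.2,
      abs_sub_comm (Real.arccos t), abs_of_nonneg (sub_nonneg.2 hat),
      abs_of_nonneg (sub_nonneg.2 (Real.antitone_arccos hat))] at hcos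
    linarith

section FrameCoeff

open scoped Matrix

variable {ι E : Type*} [Fintype ι] [NormedAddCommGroup E] [InnerProductSpace ℝ E]

/-- The analysis operator of the finite family `x`, sending a vector to its coefficients. -/
def frameCoeff (x : ι → E) (v : E) : ι → ℝ := fun i => ⟪x i, v⟫

theorem dotProduct_frameCoeff (u : ι → ℝ) (x : ι → E) (v : E) :
    u ⬝ᵥ frameCoeff x v = ⟪∑ i, u i • x i, v⟫ := by
  simp only [dotProduct, frameCoeff, sum_inner, real_inner_smul_left]

theorem frameCoeff_sum_smul (x : ι → E) (u : ι → ℝ) :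
    frameCoeff x (∑ i, u i • x i) = Matrix.gram ℝ x *ᵥ u := by
  ext i
  simp only [frameCoeff, inner_sum, real_inner_smul_right, Matrix.mulVec, dotProduct,
    Matrix.gram_apply, mul_comm]

theorem norm_sum_smul_sq (x : ι → E) (u : ι → ℝ) :
    ‖∑ i, u i • x i‖ ^ 2 = u ⬝ᵥ Matrix.gram ℝ x *ᵥ u := by
  rw [← frameCoeff_sum_smul, dotProduct_frameCoeff, real_inner_self_eq_norm_sq]

theorem exists_orthonormalBasis_sum_frameCoeff_smul [FiniteDimensional ℝ E] (x : ι → E) :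
    ∃ (e : OrthonormalBasis (Fin (Module.finrank ℝ E)) ℝ E)
      (m : Fin (Module.finrank ℝ E) → ℝ),
      ∀ a, ∑ i, frameCoeff x (e a) i • x i = m a • e a := by
  let F : E →ₗ[ℝ] E := ∑ i, (innerₛₗ ℝ (x i)).smulRight (x i)
  have hF (v : E) : F v = ∑ i, frameCoeff x v i • x i := by
    simp [F, frameCoeff]
  have hsymm : F.IsSymmetric := fun v w => by
    rw [hF, ← dotProduct_frameCoeff, real_inner_comm, hF, ← dotProduct_frameCoeff,
      dotProduct_comm]
  exact ⟨hsymm.eigenvectorBasis rfl, hsymm.eigenvalues rfl, fun a => by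
    rw [← hF, hsymm.apply_eigenvectorBasis, RCLike.ofReal_real_eq_id, id]⟩

theorem frameCoeff_dotProduct_of_sum_smul_eq {α : Type*} [DecidableEq α] {x : ι → E} {e : α → E}
    {m : α → ℝ} (he : Orthonormal ℝ e) (hem : ∀ a, ∑ i, frameCoeff x (e a) i • x i = m a • e a)
    (a b : α) : frameCoeff x (e a) ⬝ᵥ frameCoeff x (e b) = if a = b then m a else 0 := by
  rw [dotProduct_frameCoeff, hem, real_inner_smul_left, orthonormal_iff_ite.1 he, mul_ite,
    mul_one, mul_zero]

end FrameCoeff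

section TightFrameGram

open scoped Matrix

variable {ι : Type*} [Fintype ι]

/-- The algebraic properties of the Gram matrix of a tight frame in a `d`-dimensional space
with frame bound `c`: if `c ≠ 0`, they say that `c⁻¹ • G` is an orthogonal projection of
rank `d`. -/
structure IsTightFrameGram (G : Matrix ι ι ℝ) (c : ℝ) (d : ℕ) : Prop where
  isSymm : G.IsSymm
  mul_self : G * G = c • G
  trace_eq : G.trace = c * d

variable {G : Matrix ι ι ℝ} {c : ℝ} {d : ℕ}

namespace IsTightFrameGram

theorem mulVec_row (hG : IsTightFrameGram G c d) (i : ι) : G *ᵥ G i = c • G i := by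
  ext j
  have h := congrFun (congrFun hG.mul_self j) i
  rw [Matrix.mul_apply] at h
  simpa only [Matrix.mulVec, dotProduct, hG.isSymm.apply, Pi.smul_apply, Matrix.smul_apply] using h

theorem row_dotProduct_self (hG : IsTightFrameGram G c d) (i : ι) : G i ⬝ᵥ G i = c * G i i :=
  congrFun (hG.mulVec_row i) i

theorem diag_nonneg (hG : IsTightFrameGram G c d) (hc : 0 < c) (i : ι) : 0 ≤ G i i := by
  refine nonneg_of_mul_nonneg_right ?_ hc
  rw [← hG.row_dotProduct_self i]
  exact Finset.sum_nonneg fun j _ => mul_self_nonneg _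

theorem diag_le (hG : IsTightFrameGram G c d) (hc : 0 < c) (i : ι) : G i i ≤ c := by
  have h : G i i * G i i ≤ c * G i i := hG.row_dotProduct_self i ▸
    Finset.single_le_sum (f := fun j => G i j * G i j) (fun j _ => mul_self_nonneg _)
      (Finset.mem_univ i)
  nlinarith

theorem mul_transpose_eq (hG : IsTightFrameGram G c d) {N : Matrix ι (Fin d) ℝ}
    (hGN : G * N = c • N) (hNN : Nᵀ * N = c • 1) : N * Nᵀ = G := by
  have hNG : Nᵀ * G = c • Nᵀ := by
    simpa only [Matrix.transpose_mul, Matrix.transpose_smul, hG.isSymm.eq]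
      using congrArg Matrix.transpose hGN
  set D := G - N * Nᵀ with hD
  have hDt : Dᴴ = D := by
    rw [Matrix.conjTranspose_eq_transpose_of_trivial, hD, Matrix.transpose_sub,
      Matrix.transpose_mul, Matrix.transpose_transpose, hG.isSymm.eq]
  have hDD : D * D = c • D := by
    rw [hD, Matrix.sub_mul, Matrix.mul_sub, Matrix.mul_sub, hG.mul_self, ← Matrix.mul_assoc, hGN,
      Matrix.mul_assoc N, hNG, Matrix.mul_assoc N, ← Matrix.mul_assoc Nᵀ, hNN]
    simp [smul_sub]
  have htrace : D.trace = 0 := by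
    rw [hD, Matrix.trace_sub, hG.trace_eq, Matrix.trace_mul_comm, hNN]
    simp
  have hD0 : D = 0 := by
    rw [← Matrix.trace_conjTranspose_mul_self_eq_zero_iff, hDt, hDD, Matrix.trace_smul, htrace,
      smul_zero]
  exact (sub_eq_zero.1 hD0).symm

end IsTightFrameGram

end TightFrameGram

section EntrywiseBound

open scoped Matrix

variable {ι : Type*} [Fintype ι] {D : Matrix ι ι ℝ} {η : ℝ}

theorem mulVec_dotProduct_mulVec_le (hD : ∀ i j, |D i j| ≤ η) (u : ι → ℝ) :
    (D *ᵥ u) ⬝ᵥ (D *ᵥ u) ≤ (Fintype.card ι * η) ^ 2 * (u ⬝ᵥ u) := by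
  have hrow (i : ι) : ∑ j, D i j ^ 2 ≤ Fintype.card ι * η ^ 2 := by
    rw [← nsmul_eq_mul, ← Finset.card_univ]
    exact Finset.sum_le_card_nsmul _ _ _ fun j _ => sq_le_sq.2 ((hD i j).trans (le_abs_self η))
  have hentry (i : ι) : (D *ᵥ u) i * (D *ᵥ u) i ≤ Fintype.card ι * η ^ 2 * (u ⬝ᵥ u) := by
    calc (D *ᵥ u) i * (D *ᵥ u) i = (∑ j, D i j * u j) ^ 2 := (sq _).symm
      _ ≤ (∑ j, D i j ^ 2) * ∑ j, u j ^ 2 := Finset.sum_mul_sq_le_sq_mul_sq _ _ _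
      _ ≤ Fintype.card ι * η ^ 2 * (u ⬝ᵥ u) := by
        simp only [dotProduct, ← sq]
        gcongr
        exact hrow i
  calc (D *ᵥ u) ⬝ᵥ (D *ᵥ u) ≤ ∑ _i : ι, Fintype.card ι * η ^ 2 * (u ⬝ᵥ u) :=
        Finset.sum_le_sum fun i _ => hentry i
    _ = (Fintype.card ι * η) ^ 2 * (u ⬝ᵥ u) := by
        rw [Finset.sum_const, Finset.card_univ, nsmul_eq_mul]
        ring

theorem abs_dotProduct_mulVec_le (hη : 0 ≤ η) (hD : ∀ i j, |D i j| ≤ η) (u : ι → ℝ) :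
    |u ⬝ᵥ D *ᵥ u| ≤ Fintype.card ι * η * (u ⬝ᵥ u) := by
  have huu : 0 ≤ u ⬝ᵥ u := Finset.sum_nonneg fun i _ => mul_self_nonneg _
  refine abs_le_of_sq_le_sq ?_ (by positivity)
  calc (u ⬝ᵥ D *ᵥ u) ^ 2 ≤ (∑ i, u i ^ 2) * ∑ i, (D *ᵥ u) i ^ 2 :=
        Finset.sum_mul_sq_le_sq_mul_sq _ _ _
    _ = (u ⬝ᵥ u) * ((D *ᵥ u) ⬝ᵥ (D *ᵥ u)) := by simp only [dotProduct, sq]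
    _ ≤ (u ⬝ᵥ u) * ((Fintype.card ι * η) ^ 2 * (u ⬝ᵥ u)) := by
        gcongr
        exact mulVec_dotProduct_mulVec_le hD u
    _ = (Fintype.card ι * η * (u ⬝ᵥ u)) ^ 2 := by ring

theorem abs_mul_apply_sub_mul_apply_le {A A' B B' : Matrix ι ι ℝ} (hA' : ∀ i j, |A' i j| ≤ 1)
    (hB : ∀ i j, |B i j| ≤ 1) (hAB : ∀ i j, |A i j - B i j| ≤ η)
    (hAB' : ∀ i j, |A' i j - B' i j| ≤ η) (i j : ι) :
    |(A * A') i j - (B * B') i j| ≤ Fintype.card ι * (2 * η) := by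
  simp only [Matrix.mul_apply, ← Finset.sum_sub_distrib]
  rw [← nsmul_eq_mul, ← Finset.card_univ]
  refine (Finset.abs_sum_le_sum_abs _ _).trans (Finset.sum_le_card_nsmul _ _ _ fun k _ => ?_)
  calc |A i k * A' k j - B i k * B' k j|
      = |(A i k - B i k) * A' k j + B i k * (A' k j - B' k j)| := by ring_nf
    _ ≤ |A i k - B i k| * |A' k j| + |B i k| * |A' k j - B' k j| := by
      simpa only [abs_mul] using
        abs_add_le ((A i k - B i k) * A' k j) (B i k * (A' k j - B' k j))
    _ ≤ η * 1 + 1 * η :=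
      add_le_add (mul_le_mul (hAB i k) (hA' k j) (abs_nonneg _) ((abs_nonneg _).trans (hAB i k)))
        (mul_le_mul (hB i k) (hAB' k j) (abs_nonneg _) zero_le_one)
    _ = 2 * η := by ring

end EntrywiseBound

section TightFrameStability

open scoped Matrix

variable {ι E : Type*} [Fintype ι] [NormedAddCommGroup E] [InnerProductSpace ℝ E]
  {G : Matrix ι ι ℝ} {c η μ : ℝ} {d : ℕ} {x : ι → E}

/-- The family obtained from `x` by applying `c⁻¹ • G`. If `G` is a tight frame Gram matrix, its
Gram matrix commutes with `G`. -/
noncomputable def frameProjection (G : Matrix ι ι ℝ) (c : ℝ) (x : ι → E) (i : ι) : E :=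
  ∑ j, (c⁻¹ * G i j) • x j

theorem frameCoeff_frameProjection (G : Matrix ι ι ℝ) (c : ℝ) (x : ι → E) (v : E) :
    frameCoeff (frameProjection G c x) v = c⁻¹ • (G *ᵥ frameCoeff x v) := by
  ext i
  rw [Pi.smul_apply, smul_eq_mul, Matrix.mulVec, ← smul_eq_mul, ← smul_dotProduct,
    dotProduct_frameCoeff]
  rfl

theorem frameCoeff_frameProjection_ne_zero (hc : c ≠ 0) (hη : 0 ≤ η)
    (hxG : ∀ i j, |⟪x i, x j⟫ - G i j| ≤ η) (hημ : Fintype.card ι * η < μ)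
    (hx : ∀ v, μ * ‖v‖ ^ 2 ≤ frameCoeff x v ⬝ᵥ frameCoeff x v) {v : E} (hv : v ≠ 0) :
    frameCoeff (frameProjection G c x) v ≠ 0 := by
  intro h
  set u := frameCoeff x v with hu
  have hGu : G *ᵥ u = 0 := by
    rwa [frameCoeff_frameProjection, smul_eq_zero_iff_right (inv_ne_zero hc)] at h
  have hnorm : ‖∑ i, u i • x i‖ ^ 2 ≤ Fintype.card ι * η * (u ⬝ᵥ u) := by
    rw [norm_sum_smul_sq, ← sub_zero (Matrix.gram ℝ x *ᵥ u), ← hGu, ← Matrix.sub_mulVec]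
    exact (le_abs_self _).trans (abs_dotProduct_mulVec_le hη hxG u)
  have hinner : (u ⬝ᵥ u) ^ 2 ≤ ‖∑ i, u i • x i‖ ^ 2 * ‖v‖ ^ 2 := by
    rw [← mul_pow]
    nth_rewrite 2 [hu]
    rw [dotProduct_frameCoeff]
    exact sq_le_sq.2 ((abs_real_inner_le_norm _ _).trans (le_abs_self _))
  have hv2 : 0 < ‖v‖ ^ 2 := by positivity
  have hlow := hx v
  have huu : 0 < u ⬝ᵥ u := lt_of_lt_of_le (mul_pos (lt_of_le_of_lt (by positivity) hημ) hv2) hlow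
  have hupp : u ⬝ᵥ u ≤ Fintype.card ι * η * ‖v‖ ^ 2 := by
    refine le_of_mul_le_mul_right ?_ huu
    nlinarith [mul_le_mul_of_nonneg_right hnorm hv2.le]
  nlinarith

theorem abs_sqrt_sub_one_le {r : ℝ} (hr : 0 ≤ r) : |√r - 1| ≤ |r - 1| := by
  have hfactor : r - 1 = (√r - 1) * (√r + 1) := by
    linear_combination -Real.sq_sqrt hr
  rw [hfactor, abs_mul]
  refine le_mul_of_one_le_right (abs_nonneg _) ?_
  rw [abs_of_nonneg (by positivity)]
  linarith [Real.sqrt_nonneg r]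

theorem norm_sub_le_of_inner_eq_sqrt_mul {α : Type*} [Fintype α] (e : OrthonormalBasis α ℝ E)
    (hc : 0 < c) {m : α → ℝ} (hm : ∀ a, 0 ≤ m a) {κ : ℝ} (hκ : 0 ≤ κ)
    (hmκ : ∀ a, |m a - c| ≤ κ) {u w : E} (huw : ∀ a, ⟪u, e a⟫ = √(m a / c) * ⟪w, e a⟫) :
    ‖u - w‖ ≤ κ / c * ‖w‖ := by
  have hcoord (a) : ⟪u - w, e a⟫ ^ 2 ≤ (κ / c) ^ 2 * ⟪w, e a⟫ ^ 2 := by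
    have hsqrt : |√(m a / c) - 1| ≤ κ / c := by
      refine (abs_sqrt_sub_one_le (div_nonneg (hm a) hc.le)).trans ?_
      rw [div_sub_one hc.ne', abs_div, abs_of_pos hc]
      exact div_le_div_of_nonneg_right (hmκ a) hc.le
    rw [inner_sub_left, huw, ← sub_one_mul, mul_pow]
    exact mul_le_mul_of_nonneg_right (sq_le_sq.2 (hsqrt.trans (le_abs_self _))) (sq_nonneg _)
  refine abs_le_of_sq_le_sq' ?_ (by positivity) |>.2
  calc ‖u - w‖ ^ 2 = ∑ a, ⟪u - w, e a⟫ ^ 2 := (e.sum_sq_inner_left _).symm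
    _ ≤ ∑ a, (κ / c) ^ 2 * ⟪w, e a⟫ ^ 2 := Finset.sum_le_sum fun a _ => hcoord a
    _ = (κ / c * ‖w‖) ^ 2 := by rw [← Finset.mul_sum, e.sum_sq_inner_left, mul_pow]

namespace IsTightFrameGram

theorem mulVec_frameCoeff_frameProjection (hG : IsTightFrameGram G c d) (v : E) :
    G *ᵥ frameCoeff (frameProjection G c x) v = c • frameCoeff (frameProjection G c x) v := by
  rw [frameCoeff_frameProjection, Matrix.mulVec_smul, Matrix.mulVec_mulVec, hG.mul_self,
    Matrix.smul_mulVec, smul_comm]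

theorem sum_frameCoeff_smul_frameProjection (hG : IsTightFrameGram G c d) (hc : c ≠ 0) (v : E) :
    ∑ i, frameCoeff (frameProjection G c x) v i • frameProjection G c x i =
      ∑ i, frameCoeff (frameProjection G c x) v i • x i := by
  refine ext_inner_right ℝ fun w => ?_
  rw [← dotProduct_frameCoeff, ← dotProduct_frameCoeff, frameCoeff_frameProjection G c x w,
    dotProduct_smul, Matrix.dotProduct_mulVec, ← Matrix.mulVec_transpose, hG.isSymm.eq,
    hG.mulVec_frameCoeff_frameProjection, smul_dotProduct, smul_smul, inv_mul_cancel₀ hc, one_smul]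

theorem norm_sub_frameProjection_le (hG : IsTightFrameGram G c d) (hc : 0 < c) (hη : 0 ≤ η)
    (hxG : ∀ i j, |⟪x i, x j⟫ - G i j| ≤ η) (hμ : 0 < μ)
    (hx : ∀ v, μ * ‖v‖ ^ 2 ≤ frameCoeff x v ⬝ᵥ frameCoeff x v) (i : ι) :
    ‖x i - frameProjection G c x i‖ ≤ Fintype.card ι * η / √μ := by
  classical
  set q : ι → ℝ := Pi.single i 1 - c⁻¹ • G i with hq
  have hsub : x i - frameProjection G c x i = ∑ j, q j • x j := by
    simp [hq, frameProjection, sub_smul, Finset.sum_sub_distrib, Pi.single_apply, ite_smul]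
  have hGq : G *ᵥ q = 0 := by
    rw [hq, Matrix.mulVec_sub, Matrix.mulVec_single_one, Matrix.mulVec_smul, hG.mulVec_row,
      smul_smul, inv_mul_cancel₀ hc.ne', one_smul]
    ext j
    simp [hG.isSymm.apply]
  have hqq : q ⬝ᵥ q ≤ 1 := by
    have hexpand : q ⬝ᵥ q = 1 - c⁻¹ * G i i := by
      simp only [hq, sub_dotProduct, dotProduct_sub, smul_dotProduct, dotProduct_smul,
        single_one_dotProduct, dotProduct_single_one, hG.row_dotProduct_self, smul_eq_mul,
        Pi.single_eq_same, Pi.smul_apply, Pi.sub_apply]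
      field_simp
      ring
    have := mul_nonneg (inv_nonneg.2 hc.le) (hG.diag_nonneg hc i)
    linarith
  have hcoeff : frameCoeff x (x i - frameProjection G c x i) = (Matrix.gram ℝ x - G) *ᵥ q := by
    rw [hsub, frameCoeff_sum_smul, Matrix.sub_mulVec, hGq, sub_zero]
  have hbound := (hx _).trans (hcoeff ▸ mulVec_dotProduct_mulVec_le hxG q)
  rw [le_div_iff₀ (Real.sqrt_pos.2 hμ)]
  refine abs_le_of_sq_le_sq' ?_ (by positivity) |>.2
  rw [mul_pow, Real.sq_sqrt hμ.le]
  nlinarith [mul_le_mul_of_nonneg_left hqq (sq_nonneg (Fintype.card ι * η))]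

theorem abs_frameBound_sub_le (hG : IsTightFrameGram G c d) (hc : c ≠ 0) (hη : 0 ≤ η)
    (hxG : ∀ i j, |⟪x i, x j⟫ - G i j| ≤ η) {e : E} (he : ‖e‖ = 1) {m : ℝ} (hm : 0 < m)
    (hem : ∑ i, frameCoeff (frameProjection G c x) e i • frameProjection G c x i = m • e) :
    |m - c| ≤ Fintype.card ι * η := by
  set z := frameCoeff (frameProjection G c x) e with hz
  have hzz : z ⬝ᵥ z = m := by
    nth_rewrite 2 [hz]
    rw [dotProduct_frameCoeff, hem, real_inner_smul_left, real_inner_self_eq_norm_sq, he]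
    ring
  have hgram : z ⬝ᵥ Matrix.gram ℝ x *ᵥ z = m ^ 2 := by
    rw [← norm_sum_smul_sq, ← hG.sum_frameCoeff_smul_frameProjection hc, hem, norm_smul, he,
      mul_one, Real.norm_eq_abs, sq_abs]
  have hGz : z ⬝ᵥ G *ᵥ z = c * m := by
    rw [hz, hG.mulVec_frameCoeff_frameProjection, ← hz, dotProduct_smul, hzz, smul_eq_mul]
  have h := abs_dotProduct_mulVec_le (D := Matrix.gram ℝ x - G) hη hxG z
  rw [Matrix.sub_mulVec, dotProduct_sub, hgram, hGz, hzz, sq, ← sub_mul, abs_mul,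
    abs_of_pos hm] at h
  exact le_of_mul_le_mul_right h hm

theorem exists_gram_eq_of_principal_axes [FiniteDimensional ℝ E]
    (hG : IsTightFrameGram G c (Module.finrank ℝ E)) (hc : 0 < c) {y : ι → E}
    (hGy : ∀ v, G *ᵥ frameCoeff y v = c • frameCoeff y v)
    {e : OrthonormalBasis (Fin (Module.finrank ℝ E)) ℝ E} {m : Fin (Module.finrank ℝ E) → ℝ}
    (hem : ∀ a, ∑ i, frameCoeff y (e a) i • y i = m a • e a)
    (hm : ∀ a, 0 < m a) :
    ∃ w : ι → E, Matrix.gram ℝ w = G ∧ ∀ i a, ⟪y i, e a⟫ = √(m a / c) * ⟪w i, e a⟫ := by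
  set N : Matrix ι (Fin (Module.finrank ℝ E)) ℝ :=
    .of fun i a => √(c / m a) * frameCoeff y (e a) i
  have hcol (a) : N.col a = √(c / m a) • frameCoeff y (e a) := rfl
  have hGN : G * N = c • N := by
    ext i a
    have h : G *ᵥ N.col a = c • N.col a := by
      rw [hcol, Matrix.mulVec_smul, hGy, smul_comm]
    exact congrFun h i
  have hNN : Nᵀ * N = c • 1 := by
    ext a b
    change N.col a ⬝ᵥ N.col b = _
    rw [hcol, hcol, smul_dotProduct, dotProduct_smul,
      frameCoeff_dotProduct_of_sum_smul_eq e.orthonormal hem, Matrix.smul_apply, Matrix.one_apply]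
    split_ifs with hab
    · subst hab
      rw [smul_smul, ← sq, Real.sq_sqrt (div_pos hc (hm a)).le, smul_eq_mul, smul_eq_mul,
        mul_one, div_mul_cancel₀ _ (hm a).ne']
    · simp only [smul_zero]
  refine ⟨fun i => ∑ a, N i a • e a, ?_, fun i a => ?_⟩
  · rw [← hG.mul_transpose_eq hGN hNN]
    ext i j
    rw [Matrix.gram_apply, e.orthonormal.inner_sum, Matrix.mul_apply]
    exact Finset.sum_congr rfl fun a _ => rfl
  · have hwe : ⟪∑ b, N i b • e b, e a⟫ = √(c / m a) * ⟪y i, e a⟫ :=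
      e.orthonormal.inner_left_fintype (N i) a
    rw [hwe, ← mul_assoc, ← Real.sqrt_mul (div_pos (hm a) hc).le, div_mul_div_cancel₀ hc.ne',
      div_self (hm a).ne', Real.sqrt_one, one_mul]

theorem exists_gram_eq_and_norm_sub_le [FiniteDimensional ℝ E]
    (hG : IsTightFrameGram G c (Module.finrank ℝ E)) (hc : 0 < c) (hη : 0 ≤ η)
    (hxG : ∀ i j, |⟪x i, x j⟫ - G i j| ≤ η) (hημ : Fintype.card ι * η < μ)
    (hx : ∀ v, μ * ‖v‖ ^ 2 ≤ frameCoeff x v ⬝ᵥ frameCoeff x v) :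
    ∃ w : ι → E, Matrix.gram ℝ w = G ∧
      ∀ i, ‖x i - w i‖ ≤ Fintype.card ι * η / √μ + Fintype.card ι * η / √c := by
  set y := frameProjection G c x
  obtain ⟨e, m, hem⟩ := exists_orthonormalBasis_sum_frameCoeff_smul y
  have hm (a) : 0 < m a := by
    have hne := frameCoeff_frameProjection_ne_zero hc.ne' hη hxG hημ hx (e.orthonormal.ne_zero a)
    have hma : frameCoeff y (e a) ⬝ᵥ frameCoeff y (e a) = m a := by
      rw [frameCoeff_dotProduct_of_sum_smul_eq e.orthonormal hem, if_pos rfl]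
    rw [← hma]
    exact (Finset.sum_nonneg fun i _ => mul_self_nonneg _).lt_of_ne' fun h0 =>
      hne (dotProduct_self_eq_zero.1 h0)
  obtain ⟨w, hw, hyw⟩ := hG.exists_gram_eq_of_principal_axes hc
    hG.mulVec_frameCoeff_frameProjection hem hm
  refine ⟨w, hw, fun i => ?_⟩
  have hnorm : ‖w i‖ ≤ √c := by
    refine Real.le_sqrt_of_sq_le ?_
    rw [← real_inner_self_eq_norm_sq, ← Matrix.gram_apply, hw]
    exact hG.diag_le hc i
  have hxy := hG.norm_sub_frameProjection_le hc hη hxG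
    (lt_of_le_of_lt (by positivity) hημ) hx i
  have hyw' : ‖y i - w i‖ ≤ Fintype.card ι * η / √c := by
    calc ‖y i - w i‖ ≤ Fintype.card ι * η / c * ‖w i‖ :=
          norm_sub_le_of_inner_eq_sqrt_mul e hc (fun a => (hm a).le) (by positivity)
            (fun a => hG.abs_frameBound_sub_le hc.ne' hη hxG (e.norm_eq_one a) (hm a) (hem a))
            (hyw i)
      _ ≤ Fintype.card ι * η / c * √c := by gcongr
      _ = Fintype.card ι * η / √c := by
        rw [div_mul_eq_mul_div, mul_div_assoc, Real.sqrt_div_self', mul_one_div]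
  exact (norm_sub_le_norm_sub_add_norm_sub _ (y i) _).trans (add_le_add hxy hyw')

end IsTightFrameGram

end TightFrameStability

section FramePotential

open scoped Matrix

variable {ι α E : Type*} [Fintype ι] [Fintype α] [NormedAddCommGroup E] [InnerProductSpace ℝ E]

/-- The excess of the Benedetto–Fickus frame potential `∑ i, ∑ j, ⟪x i, x j⟫ ^ 2` over the lower
bound `n ^ 2 / dim E` valid for families of `n` unit vectors. Among such families,
precisely the tight frames have excess zero. -/
noncomputable def frameExcess (x : ι → E) : ℝ :=
  ∑ i, ∑ j, ⟪x i, x j⟫ ^ 2 - (Fintype.card ι : ℝ) ^ 2 / Module.finrank ℝ E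

/-- The matrix whose rows are the coordinates of the vectors `x i` in the orthonormal basis `e`. -/
noncomputable def coordMatrix (e : OrthonormalBasis α ℝ E) (x : ι → E) : Matrix ι α ℝ :=
  .of fun i a => ⟪x i, e a⟫

omit [Fintype ι] in
theorem coordMatrix_mulVec (e : OrthonormalBasis α ℝ E) (x : ι → E) (v : E) :
    coordMatrix e x *ᵥ e.repr v = frameCoeff x v := by
  ext i
  simp only [coordMatrix, frameCoeff, Matrix.mulVec, dotProduct, Matrix.of_apply,
    OrthonormalBasis.repr_apply_apply, e.sum_inner_mul_inner]

omit [Fintype ι] in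
theorem coordMatrix_mul_transpose (e : OrthonormalBasis α ℝ E) (x : ι → E) :
    coordMatrix e x * (coordMatrix e x)ᵀ = Matrix.gram ℝ x := by
  ext i j
  simp only [coordMatrix, Matrix.mul_apply, Matrix.transpose_apply, Matrix.of_apply,
    Matrix.gram_apply, real_inner_comm (e _) (x j), e.sum_inner_mul_inner]

theorem sum_sum_sq_eq_trace (A : Matrix ι α ℝ) : ∑ i, ∑ a, A i a ^ 2 = (A * Aᵀ).trace := by
  simp only [Matrix.trace, Matrix.diag, Matrix.mul_apply, Matrix.transpose_apply, sq]

theorem frameExcess_eq_sum_sq [DecidableEq α] (e : OrthonormalBasis α ℝ E) {x : ι → E}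
    (hx : ∀ i, ‖x i‖ = 1) :
    frameExcess x = ∑ a, ∑ b, ((coordMatrix e x)ᵀ * coordMatrix e x -
      ((Fintype.card ι : ℝ) / Module.finrank ℝ E) • (1 : Matrix α α ℝ)) a b ^ 2 := by
  set n : ℝ := (Fintype.card ι : ℝ) with hn
  set d : ℝ := (Module.finrank ℝ E : ℝ) with hd
  set M := coordMatrix e x with hM
  have hpotential : ∑ i, ∑ j, ⟪x i, x j⟫ ^ 2 = (Mᵀ * M * (Mᵀ * M)).trace := by
    simp only [← Matrix.gram_apply (𝕜 := ℝ)]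
    rw [sum_sum_sq_eq_trace, ← coordMatrix_mul_transpose e, ← hM, Matrix.transpose_mul,
      Matrix.transpose_transpose, Matrix.mul_assoc, Matrix.trace_mul_comm]
    simp only [Matrix.mul_assoc]
  have htrace : (Mᵀ * M).trace = n := by
    rw [Matrix.trace_mul_comm, coordMatrix_mul_transpose]
    simp [Matrix.trace, hx, hn]
  have hdim : (Fintype.card α : ℝ) = d := by
    rw [hd, Module.finrank_eq_card_basis e.toBasis]
  rw [frameExcess, ← hn, ← hd, hpotential, sum_sum_sq_eq_trace]
  simp only [Matrix.transpose_sub, Matrix.transpose_mul, Matrix.transpose_transpose,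
    Matrix.transpose_smul, Matrix.transpose_one, Matrix.sub_mul, Matrix.mul_sub, Matrix.smul_mul,
    Matrix.mul_smul, Matrix.one_mul, Matrix.mul_one, Matrix.trace_sub, Matrix.trace_smul,
    Matrix.trace_one, htrace, hdim, smul_eq_mul]
  rcases eq_or_ne d 0 with h0 | h0
  · simp [h0]
  · field_simp
    ring

theorem frameExcess_nonneg [FiniteDimensional ℝ E] {x : ι → E} (hx : ∀ i, ‖x i‖ = 1) :
    0 ≤ frameExcess x := by
  rw [frameExcess_eq_sum_sq (stdOrthonormalBasis ℝ E) hx]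
  exact Finset.sum_nonneg fun a _ => Finset.sum_nonneg fun b _ => sq_nonneg _

theorem sq_frameCoeff_dotProduct_sub_le [FiniteDimensional ℝ E] {x : ι → E}
    (hx : ∀ i, ‖x i‖ = 1) (u v : E) :
    (frameCoeff x u ⬝ᵥ frameCoeff x v -
      (Fintype.card ι : ℝ) / Module.finrank ℝ E * ⟪u, v⟫) ^ 2 ≤
      frameExcess x * (‖u‖ ^ 2 * ‖v‖ ^ 2) := by
  set e := stdOrthonormalBasis ℝ E
  set r : ℝ := (Fintype.card ι : ℝ) / Module.finrank ℝ E
  set B := (coordMatrix e x)ᵀ * coordMatrix e x - r • (1 : Matrix _ _ ℝ) with hB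
  have hinner : ⟪u, v⟫ = e.repr u ⬝ᵥ e.repr v := by
    simp only [← e.sum_inner_mul_inner u v, dotProduct, OrthonormalBasis.repr_apply_apply,
      real_inner_comm]
  have hbilin : frameCoeff x u ⬝ᵥ frameCoeff x v - r * ⟪u, v⟫ = e.repr u ⬝ᵥ B *ᵥ e.repr v := by
    rw [hinner, hB, Matrix.sub_mulVec, Matrix.smul_mulVec, Matrix.one_mulVec, dotProduct_sub,
      dotProduct_smul, ← Matrix.mulVec_mulVec, Matrix.dotProduct_mulVec, Matrix.vecMul_transpose,
      coordMatrix_mulVec, coordMatrix_mulVec, smul_eq_mul]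
  have hnorm (z : E) : ‖z‖ ^ 2 = ∑ a, e.repr z a ^ 2 := by
    rw [← e.repr.norm_map z, EuclideanSpace.real_norm_sq_eq]
  rw [hbilin, frameExcess_eq_sum_sq e hx, hnorm, hnorm, Finset.sum_mul_sum,
    ← Fintype.sum_prod_type', ← Fintype.sum_prod_type']
  have hprod : e.repr u ⬝ᵥ B *ᵥ e.repr v =
      ∑ p : _ × _, B p.1 p.2 * (e.repr u p.1 * e.repr v p.2) := by
    rw [Fintype.sum_prod_type]
    simp only [dotProduct, Matrix.mulVec, Finset.mul_sum]
    exact Finset.sum_congr rfl fun a _ => Finset.sum_congr rfl fun b _ => by ring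
  rw [hprod]
  simp only [← mul_pow]
  exact Finset.sum_mul_sq_le_sq_mul_sq _ _ _

end FramePotential

section Delsarte

/-- The cosine of the angle subtended by an edge of the regular icosahedron. -/
noncomputable def edgeCos : ℝ := 1 / √5

theorem edgeCos_sq : edgeCos ^ 2 = 1 / 5 := by
  rw [edgeCos, div_pow, Real.sq_sqrt (by norm_num), one_pow]

theorem edgeCos_pos : 0 < edgeCos := by
  unfold edgeCos
  positivity

theorem lt_edgeCos : 0.447 < edgeCos :=
  lt_of_pow_lt_pow_left₀ 2 edgeCos_pos.le (by rw [edgeCos_sq]; norm_num)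

theorem edgeCos_lt : edgeCos < 0.448 :=
  lt_of_pow_lt_pow_left₀ 2 (by norm_num) (by rw [edgeCos_sq]; norm_num)

/-- The test polynomial for Delsarte's linear programming bound at inner product `edgeCos`. It
vanishes precisely at the inner products of distinct icosahedron vertices. -/
noncomputable def delsartePoly (t : ℝ) : ℝ := (t + 1) * (t + edgeCos) ^ 2 * (t - edgeCos)

theorem delsartePoly_one : delsartePoly 1 = 8 / 5 * (1 + edgeCos) := by
  unfold delsartePoly
  linear_combination (-2 - 2 * edgeCos) * edgeCos_sq

theorem delsartePoly_le {t δ : ℝ} (hδ₀ : 0 ≤ δ) (hδ : δ ≤ 1 / 10 ^ 8) (ht₁ : -1 ≤ t)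
    (ht₂ : t ≤ edgeCos + δ) : delsartePoly t ≤ 2 * δ := by
  have hs := edgeCos_lt
  have hs0 := edgeCos_pos
  unfold delsartePoly
  rcases le_total t edgeCos with h | h
  · have : 0 ≤ (t + 1) * (t + edgeCos) ^ 2 * (edgeCos - t) :=
      mul_nonneg (mul_nonneg (by linarith) (sq_nonneg _)) (sub_nonneg.2 h)
    linarith
  · have hfactor : (t + 1) * (t + edgeCos) ^ 2 ≤ 1.5 * 1 ^ 2 := by
      gcongr <;> linarith
    calc _ ≤ 1.5 * 1 ^ 2 * δ := by gcongr; linarith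
      _ ≤ 2 * δ := by linarith

theorem delsartePoly_eq_legendre (t : ℝ) :
    delsartePoly t = 2 / 15 * (1 + edgeCos) + 2 / 5 * (1 + edgeCos) * t +
      (edgeCos + 23 / 35) * (t ^ 2 - 1 / 3) +
      2 / 5 * (1 + edgeCos) * ((5 * t ^ 3 - 3 * t) / 2) +
      8 / 35 * ((35 * t ^ 4 - 30 * t ^ 2 + 3) / 8) := by
  unfold delsartePoly
  linear_combination -(t + 1) * (t + edgeCos) * edgeCos_sq

variable {ι : Type*} [Fintype ι]

theorem sum_sum_nonneg_of_eq_sum_mul_mul {μ : Type*} [Fintype μ] {K : ι → ι → ℝ} {c : μ → ℝ}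
    (hc : ∀ m, 0 ≤ c m) (H : μ → ι → ℝ) (hK : ∀ i j, K i j = ∑ m, c m * (H m i * H m j)) :
    0 ≤ ∑ i, ∑ j, K i j := by
  have hsum : ∑ i, ∑ j, K i j = ∑ m, c m * (∑ i, H m i) ^ 2 := by
    simp only [hK]
    rw [Finset.sum_congr rfl fun i _ => Finset.sum_comm, Finset.sum_comm]
    refine Finset.sum_congr rfl fun m _ => ?_
    simp only [← Finset.mul_sum, ← Finset.sum_mul, sq]
  rw [hsum]
  exact Finset.sum_nonneg fun m _ => mul_nonneg (hc m) (sq_nonneg _)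

theorem sum_sum_inner_nonneg {E : Type*} [NormedAddCommGroup E] [InnerProductSpace ℝ E]
    (x : ι → E) : 0 ≤ ∑ i, ∑ j, ⟪x i, x j⟫ := by
  simp_rw [← inner_sum, ← sum_inner]
  exact real_inner_self_nonneg

theorem inner_euclideanSpace_three (u v : EuclideanSpace ℝ (Fin 3)) :
    ⟪u, v⟫ = u 0 * v 0 + u 1 * v 1 + u 2 * v 2 := by
  simp [PiLp.inner_apply, Fin.sum_univ_three, mul_comm]

theorem sq_add_sq_add_sq_eq_one {u : EuclideanSpace ℝ (Fin 3)} (hu : ‖u‖ = 1) :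
    u 0 ^ 2 + u 1 ^ 2 + u 2 ^ 2 = 1 := by
  rw [← Fin.sum_univ_three (fun i => u i ^ 2), ← EuclideanSpace.real_norm_sq_eq, hu, one_pow]

variable {x : ι → EuclideanSpace ℝ (Fin 3)}

-- The real spherical harmonics of degrees 3 and 4, written as homogeneous polynomials, are the
-- `H m` below; the identity for `K` is their addition theorem.
theorem sum_sum_legendre_three_nonneg (hx : ∀ i, ‖x i‖ = 1) :
    0 ≤ ∑ i, ∑ j, (5 * ⟪x i, x j⟫ ^ 3 - 3 * ⟪x i, x j⟫) / 2 := by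
  refine sum_sum_nonneg_of_eq_sum_mul_mul (c := ![1 / 4, 3 / 8, 3 / 8, 15, 15 / 4, 5 / 8, 5 / 8])
    (fun m => by fin_cases m <;> norm_num)
    ![fun i => x i 2 * (2 * x i 2 ^ 2 - 3 * x i 0 ^ 2 - 3 * x i 1 ^ 2),
      fun i => x i 0 * (4 * x i 2 ^ 2 - x i 0 ^ 2 - x i 1 ^ 2),
      fun i => x i 1 * (4 * x i 2 ^ 2 - x i 0 ^ 2 - x i 1 ^ 2),
      fun i => x i 0 * x i 1 * x i 2,
      fun i => x i 2 * (x i 0 ^ 2 - x i 1 ^ 2),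
      fun i => x i 0 * (x i 0 ^ 2 - 3 * x i 1 ^ 2),
      fun i => x i 1 * (3 * x i 0 ^ 2 - x i 1 ^ 2)] fun i j => ?_
  have hhom : (5 * ⟪x i, x j⟫ ^ 3 - 3 * ⟪x i, x j⟫) / 2 =
      (5 * ⟪x i, x j⟫ ^ 3 - 3 * ⟪x i, x j⟫ * ((x i 0 ^ 2 + x i 1 ^ 2 + x i 2 ^ 2) *
        (x j 0 ^ 2 + x j 1 ^ 2 + x j 2 ^ 2))) / 2 := by
    rw [sq_add_sq_add_sq_eq_one (hx i), sq_add_sq_add_sq_eq_one (hx j)]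
    ring
  rw [hhom, inner_euclideanSpace_three]
  simp only [Fin.sum_univ_seven, Matrix.cons_val]
  ring

theorem sum_sum_legendre_four_nonneg (hx : ∀ i, ‖x i‖ = 1) :
    0 ≤ ∑ i, ∑ j, (35 * ⟪x i, x j⟫ ^ 4 - 30 * ⟪x i, x j⟫ ^ 2 + 3) / 8 := by
  refine sum_sum_nonneg_of_eq_sum_mul_mul
    (c := ![1 / 64, 5 / 8, 5 / 8, 5 / 4, 5 / 16, 35 / 8, 35 / 8, 35 / 4, 35 / 64])
    (fun m => by fin_cases m <;> norm_num)
    ![fun i => 35 * x i 2 ^ 4 - 30 * x i 2 ^ 2 * (x i 0 ^ 2 + x i 1 ^ 2 + x i 2 ^ 2) +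
        3 * (x i 0 ^ 2 + x i 1 ^ 2 + x i 2 ^ 2) ^ 2,
      fun i => x i 0 * x i 2 * (4 * x i 2 ^ 2 - 3 * x i 0 ^ 2 - 3 * x i 1 ^ 2),
      fun i => x i 1 * x i 2 * (4 * x i 2 ^ 2 - 3 * x i 0 ^ 2 - 3 * x i 1 ^ 2),
      fun i => x i 0 * x i 1 * (6 * x i 2 ^ 2 - x i 0 ^ 2 - x i 1 ^ 2),
      fun i => (x i 0 ^ 2 - x i 1 ^ 2) * (6 * x i 2 ^ 2 - x i 0 ^ 2 - x i 1 ^ 2),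
      fun i => x i 0 * x i 2 * (x i 0 ^ 2 - 3 * x i 1 ^ 2),
      fun i => x i 1 * x i 2 * (3 * x i 0 ^ 2 - x i 1 ^ 2),
      fun i => x i 0 * x i 1 * (x i 0 ^ 2 - x i 1 ^ 2),
      fun i => x i 0 ^ 4 - 6 * x i 0 ^ 2 * x i 1 ^ 2 + x i 1 ^ 4] fun i j => ?_
  have hhom : (35 * ⟪x i, x j⟫ ^ 4 - 30 * ⟪x i, x j⟫ ^ 2 + 3) / 8 =
      (35 * ⟪x i, x j⟫ ^ 4 - 30 * ⟪x i, x j⟫ ^ 2 * ((x i 0 ^ 2 + x i 1 ^ 2 + x i 2 ^ 2) *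
        (x j 0 ^ 2 + x j 1 ^ 2 + x j 2 ^ 2)) + 3 * ((x i 0 ^ 2 + x i 1 ^ 2 + x i 2 ^ 2) *
        (x j 0 ^ 2 + x j 1 ^ 2 + x j 2 ^ 2)) ^ 2) / 8 := by
    rw [sq_add_sq_add_sq_eq_one (hx i), sq_add_sq_add_sq_eq_one (hx j)]
    ring
  rw [hhom, inner_euclideanSpace_three]
  simp only [Fin.sum_univ_succ, Fin.succ_zero_eq_one, Fin.succ_one_eq_two, Fin.reduceSucc,
    Matrix.cons_val]
  ring

theorem le_sum_sum_delsartePoly (hx : ∀ i, ‖x i‖ = 1) :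
    2 / 15 * (1 + edgeCos) * (Fintype.card ι : ℝ) ^ 2 + (edgeCos + 23 / 35) * frameExcess x ≤
      ∑ i, ∑ j, delsartePoly ⟪x i, x j⟫ := by
  have hs := edgeCos_pos
  have hexpand : ∑ i, ∑ j, delsartePoly ⟪x i, x j⟫ =
      2 / 15 * (1 + edgeCos) * (Fintype.card ι : ℝ) ^ 2 +
      2 / 5 * (1 + edgeCos) * (∑ i, ∑ j, ⟪x i, x j⟫) +
      (edgeCos + 23 / 35) * (∑ i, ∑ j, (⟪x i, x j⟫ ^ 2 - 1 / 3)) +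
      2 / 5 * (1 + edgeCos) * (∑ i, ∑ j, (5 * ⟪x i, x j⟫ ^ 3 - 3 * ⟪x i, x j⟫) / 2) +
      8 / 35 * (∑ i, ∑ j, (35 * ⟪x i, x j⟫ ^ 4 - 30 * ⟪x i, x j⟫ ^ 2 + 3) / 8) := by
    simp_rw [delsartePoly_eq_legendre, Finset.sum_add_distrib, ← Finset.mul_sum]
    simp only [Finset.sum_const, Finset.card_univ, nsmul_eq_mul]
    ring
  have hexcess : ∑ i, ∑ j, (⟪x i, x j⟫ ^ 2 - 1 / 3) = frameExcess x := by
    simp only [frameExcess, Finset.sum_sub_distrib, Finset.sum_const, Finset.card_univ,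
      nsmul_eq_mul, finrank_euclideanSpace_fin]
    push_cast
    ring
  have h₁ := mul_nonneg (by linarith : 0 ≤ 2 / 5 * (1 + edgeCos)) (sum_sum_inner_nonneg x)
  have h₃ := mul_nonneg (by linarith : 0 ≤ 2 / 5 * (1 + edgeCos))
    (sum_sum_legendre_three_nonneg hx)
  have h₄ := sum_sum_legendre_four_nonneg hx
  rw [hexpand, hexcess]
  linarith

theorem frameExcess_add_le_sum_offDiag (hx : ∀ i, ‖x i‖ = 1) :
    frameExcess x + 2 / 15 * (1 + edgeCos) * (Fintype.card ι * (Fintype.card ι - 12)) ≤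
      ∑ p ∈ Finset.univ.offDiag, delsartePoly ⟪x p.1, x p.2⟫ := by
  classical
  have hsplit : ∑ i, ∑ j, delsartePoly ⟪x i, x j⟫ = Fintype.card ι * delsartePoly 1 +
      ∑ p ∈ Finset.univ.offDiag, delsartePoly ⟪x p.1, x p.2⟫ := by
    rw [← Finset.sum_product', ← Finset.diag_union_offDiag,
      Finset.sum_union (Finset.disjoint_diag_offDiag _), Finset.sum_diag]
    simp only [real_inner_self_eq_norm_sq, hx, one_pow, Finset.sum_const, Finset.card_univ,
      nsmul_eq_mul]
  have h := le_sum_sum_delsartePoly hx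
  rw [hsplit, delsartePoly_one] at h
  have hexcess := mul_nonneg (by linarith [lt_edgeCos] : 0 ≤ edgeCos + 23 / 35 - 1)
    (frameExcess_nonneg hx)
  linarith

variable {δ : ℝ}

theorem sum_offDiag_delsartePoly_le (hδ₀ : 0 ≤ δ) (hδ : δ ≤ 1 / 10 ^ 8)
    (hx : ∀ i, ‖x i‖ = 1) (hsep : ∀ i j, i ≠ j → ⟪x i, x j⟫ ≤ edgeCos + δ)
    {s : Finset (ι × ι)} (hs : s ⊆ Finset.univ.offDiag) :
    ∑ p ∈ s, delsartePoly ⟪x p.1, x p.2⟫ ≤ s.card * (2 * δ) := by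
  rw [← nsmul_eq_mul]
  refine Finset.sum_le_card_nsmul _ _ _ fun p hp => ?_
  exact delsartePoly_le hδ₀ hδ (abs_le.1 (abs_inner_le_one (hx _) (hx _))).1
    (hsep _ _ (Finset.mem_offDiag.1 (hs hp)).2.2)

theorem card_le_twelve (hδ₀ : 0 ≤ δ) (hδ : δ ≤ 1 / 10 ^ 8) (hx : ∀ i, ‖x i‖ = 1)
    (hsep : ∀ i j, i ≠ j → ⟪x i, x j⟫ ≤ edgeCos + δ) : Fintype.card ι ≤ 12 := by
  classical
  by_contra! hcard
  have hn13 : (13 : ℝ) ≤ Fintype.card ι := by exact_mod_cast hcard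
  have hlower := frameExcess_add_le_sum_offDiag hx
  have hupper := sum_offDiag_delsartePoly_le hδ₀ hδ hx hsep subset_rfl
  rw [Finset.offDiag_card, Finset.card_univ, Nat.cast_sub (Nat.le_mul_self _),
    Nat.cast_mul] at hupper
  have hexcess := frameExcess_nonneg hx
  set n : ℝ := (Fintype.card ι : ℝ)
  have hgain : 2 / 15 * (n / 13) ≤ 2 / 15 * (1 + edgeCos) * (n - 12) := by
    have := mul_nonneg edgeCos_pos.le (by linarith : 0 ≤ n - 12)
    linarith
  have hgain_mul := mul_le_mul_of_nonneg_right hgain (by linarith : 0 ≤ n)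
  have hloss : (n * n - n) * (2 * δ) ≤ n * n * (2 / 10 ^ 8) := by
    gcongr <;> linarith
  nlinarith

variable (hcard : Fintype.card ι = 12) (hδ₀ : 0 ≤ δ) (hδ : δ ≤ 1 / 10 ^ 8) (hx : ∀ i, ‖x i‖ = 1)
  (hsep : ∀ i j, i ≠ j → ⟪x i, x j⟫ ≤ edgeCos + δ)

include hcard hδ₀ hδ hx hsep

theorem frameExcess_le : frameExcess x ≤ 264 * δ := by
  classical
  have hlower := frameExcess_add_le_sum_offDiag hx
  have hupper := sum_offDiag_delsartePoly_le hδ₀ hδ hx hsep subset_rfl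
  rw [Finset.offDiag_card, Finset.card_univ, hcard] at hupper
  rw [hcard] at hlower
  norm_num at hlower hupper
  linarith

theorem le_delsartePoly_inner {i j : ι} (hij : i ≠ j) :
    -(264 * δ) ≤ delsartePoly ⟪x i, x j⟫ := by
  classical
  have hmem : (i, j) ∈ (Finset.univ : Finset ι).offDiag := by simpa using hij
  have hlower := frameExcess_add_le_sum_offDiag hx
  have hupper := sum_offDiag_delsartePoly_le hδ₀ hδ hx hsep
    (Finset.erase_subset (i, j) Finset.univ.offDiag)
  rw [Finset.card_erase_of_mem hmem, Finset.offDiag_card, Finset.card_univ, hcard] at hupper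
  rw [← Finset.add_sum_erase _ _ hmem, hcard] at hlower
  have hexcess := frameExcess_nonneg hx
  norm_num at hlower hupper
  linarith

end Delsarte

section AlmostIcosahedral

variable {ι : Type*} [Fintype ι]

/-- A combinatorial approximation to the Gram matrix of the icosahedron: the entries take the
values of the icosahedron, but `G * G = 4 • G` is only required up to the tolerance `1 / 10`. -/
structure IsAlmostIcosahedralGram (G : Matrix ι ι ℝ) : Prop where
  card_eq : Fintype.card ι = 12
  isSymm : G.IsSymm
  apply_self (i : ι) : G i i = 1
  apply_of_ne {i j : ι} (hij : i ≠ j) : G i j = edgeCos ∨ G i j = -edgeCos ∨ G i j = -1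
  abs_mul_self_sub_le (i j : ι) : |(G * G) i j - 4 * G i j| ≤ 1 / 10

namespace IsAlmostIcosahedralGram

variable {G : Matrix ι ι ℝ} (hG : IsAlmostIcosahedralGram G) {i j k : ι}

include hG

theorem mul_self_apply (i j : ι) : (G * G) i j = ∑ k, G i k * G j k := by
  simp only [Matrix.mul_apply, hG.isSymm.apply j]

theorem apply_mem (i j : ι) :
    G i j = edgeCos ∨ G i j = -edgeCos ∨ G i j = -1 ∨ G i j = 1 := by
  rcases eq_or_ne i j with rfl | hij
  · exact .inr (.inr (.inr (hG.apply_self i)))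
  · rcases hG.apply_of_ne hij with h | h | h <;> simp only [h, true_or, or_true]

theorem eq_of_apply_eq_one (h : G i j = 1) : i = j := by
  by_contra hij
  rcases hG.apply_of_ne hij with h' | h' | h' <;> linarith [lt_edgeCos, edgeCos_lt]

theorem mul_self_apply_self_eq_card (i : ι) :
    (G * G) i i = 16 / 5 + 4 / 5 * (Finset.univ.filter (G i · = -1)).card := by
  classical
  have hpoint (k : ι) : G i k * G i k =
      1 / 5 + (if k = i then 4 / 5 else 0) + (if G i k = -1 then 4 / 5 else 0) := by
    rcases eq_or_ne k i with rfl | hki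
    · norm_num [hG.apply_self]
    · rcases hG.apply_of_ne hki.symm with h | h | h <;> rw [h, if_neg hki]
      · rw [if_neg (by linarith [lt_edgeCos])]
        linarith [edgeCos_sq]
      · rw [if_neg (by linarith [edgeCos_lt])]
        linarith [edgeCos_sq]
      · norm_num
  simp only [hG.mul_self_apply, hpoint, Finset.sum_add_distrib, Finset.sum_const,
    Finset.card_univ, hG.card_eq, Finset.sum_ite_eq', Finset.mem_univ, if_true,
    ← Finset.sum_filter, nsmul_eq_mul]
  push_cast
  ring

theorem card_filter_eq_neg_one (i : ι) : (Finset.univ.filter (G i · = -1)).card = 1 := by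
  have hnear := abs_le.1 (hG.abs_mul_self_sub_le i i)
  rw [hG.mul_self_apply_self_eq_card, hG.apply_self] at hnear
  refine le_antisymm (Nat.le_of_lt_succ ?_) (Nat.succ_le_of_lt ?_) <;>
    rw [← Nat.cast_lt (α := ℝ)] <;> push_cast <;> linarith

theorem mul_self_apply_self (i : ι) : (G * G) i i = 4 := by
  rw [hG.mul_self_apply_self_eq_card, hG.card_filter_eq_neg_one]
  norm_num

theorem existsUnique_eq_neg_one (i : ι) : ∃! k, G i k = -1 := by
  obtain ⟨k, hk⟩ := Finset.card_eq_one.1 (hG.card_filter_eq_neg_one i)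
  exact ⟨k, by simpa using hk.ge (Finset.mem_singleton_self k),
    fun l hl => by simpa using hk.le (Finset.mem_filter.2 ⟨Finset.mem_univ l, hl⟩)⟩

theorem apply_eq_neg_of_eq_neg_one (hij : G i j = -1) (k : ι) : G j k = -G i k := by
  rw [eq_neg_iff_add_eq_zero, add_comm]
  have hnear := abs_le.1 (hG.abs_mul_self_sub_le i j)
  have hsum : ∑ l, (G i l + G j l) ^ 2 ≤ 1 / 5 := by
    calc ∑ l, (G i l + G j l) ^ 2 = (G * G) i i + 2 * (G * G) i j + (G * G) j j := by
          simp only [hG.mul_self_apply, Finset.mul_sum, ← Finset.sum_add_distrib]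
          exact Finset.sum_congr rfl fun l _ => by ring
      _ ≤ 1 / 5 := by
          rw [hG.mul_self_apply_self, hG.mul_self_apply_self]
          linarith
  have hle : (G i k + G j k) ^ 2 ≤ 1 / 5 :=
    (Finset.single_le_sum (fun l _ => sq_nonneg (G i l + G j l)) (Finset.mem_univ k)).trans hsum
  have hs := lt_edgeCos
  have hs' := edgeCos_lt
  rcases hG.apply_mem i k with hi | hi | hi | hi <;>
    rcases hG.apply_mem j k with hj | hj | hj | hj <;> rw [hi, hj] at hle ⊢ <;>
    first | ring_nf; done | nlinarith

theorem sum_compl_mem_zmultiples [DecidableEq ι] {s : Finset ι}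
    (hs : ∀ k, k ∉ s → k ≠ i ∧ k ≠ j ∧ G i k ≠ -1 ∧ G j k ≠ -1) :
    ∑ k ∈ sᶜ, G i k * G j k ∈ AddSubgroup.zmultiples (1 / 5 : ℝ) := by
  refine sum_mem fun k hk => ?_
  obtain ⟨hki, hkj, hik, hjk⟩ := hs k (Finset.mem_compl.1 hk)
  have hsq : edgeCos * edgeCos = 1 / 5 := by rw [← sq, edgeCos_sq]
  rcases hG.apply_of_ne hki.symm with hi | hi | hi
  on_goal 3 => exact absurd hi hik
  all_goals
    rcases hG.apply_of_ne hkj.symm with hj | hj | hj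
    on_goal 3 => exact absurd hj hjk
    all_goals
      simp only [hi, hj, mul_neg, neg_mul, neg_neg, hsq, neg_mem_iff,
        AddSubgroup.mem_zmultiples]

theorem ne_of_apply_eq_neg_one {i' j' : ι} (hij : i ≠ j) (hi' : G i i' = -1)
    (hj' : G j j' = -1) : i' ≠ j' := by
  rintro rfl
  refine hij (hG.eq_of_apply_eq_one ?_)
  have h := hG.apply_eq_neg_of_eq_neg_one hj' i
  rw [hG.apply_eq_neg_of_eq_neg_one hi', hG.apply_self, neg_inj, hG.isSymm.apply] at h
  exact h.symm

theorem sum_pair_and_antipodes [DecidableEq ι] {i' j' : ι} (hij : i ≠ j) (hne : G i j ≠ -1)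
    (hi' : G i i' = -1) (hj' : G j j' = -1) :
    ∑ k ∈ {i, j, i', j'}, G i k * G j k = 4 * G i j := by
  have hself (k : ι) : G k k ≠ -1 := by norm_num [hG.apply_self]
  rw [Finset.sum_insert, Finset.sum_insert,
    Finset.sum_pair (hG.ne_of_apply_eq_neg_one hij hi' hj'), hi', hj',
    ← hG.isSymm.apply j i', ← hG.isSymm.apply i j', hG.apply_eq_neg_of_eq_neg_one hi',
    hG.apply_eq_neg_of_eq_neg_one hj', hG.apply_self, hG.apply_self, hG.isSymm.apply j i]
  · ring
  · simp only [Finset.mem_insert, Finset.mem_singleton, not_or]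
    exact ⟨fun h => hne (h ▸ hi'), fun h => hself j (h ▸ hj')⟩
  · simp only [Finset.mem_insert, Finset.mem_singleton, not_or]
    exact ⟨hij, fun h => hself i (h ▸ hi'), fun h => hne (hG.isSymm.apply i j ▸ h ▸ hj')⟩

theorem mul_self_apply_of_ne (hij : i ≠ j) (hne : G i j ≠ -1) : (G * G) i j = 4 * G i j := by
  classical
  -- For `k` away from `i`, `j` and their antipodes, `G i k * G j k` is `± 1 / 5`, so the deviation
  -- of `(G * G) i j` from `4 * G i j` is a multiple of `1 / 5`, while it is at most `1 / 10`.
  obtain ⟨i', hi', hi'_unique⟩ := hG.existsUnique_eq_neg_one i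
  obtain ⟨j', hj', hj'_unique⟩ := hG.existsUnique_eq_neg_one j
  obtain ⟨m, hm⟩ := AddSubgroup.mem_zmultiples_iff.1
    (hG.sum_compl_mem_zmultiples (i := i) (j := j) (s := {i, j, i', j'}) fun k hk => by
      simp only [Finset.mem_insert, Finset.mem_singleton, not_or] at hk
      exact ⟨hk.1, hk.2.1, fun h => hk.2.2.1 (hi'_unique k h), fun h => hk.2.2.2 (hj'_unique k h)⟩)
  have hsplit : (G * G) i j = 4 * G i j + m / 5 := by
    rw [hG.mul_self_apply, ← Finset.sum_add_sum_compl {i, j, i', j'},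
      hG.sum_pair_and_antipodes hij hne hi' hj', ← hm, zsmul_eq_mul, mul_one_div]
  have hm0 : m = 0 := by
    have hnear := hG.abs_mul_self_sub_le i j
    rw [hsplit, add_sub_cancel_left, abs_div, ← Int.cast_abs] at hnear
    rw [← Int.abs_lt_one_iff, ← Int.cast_lt (R := ℝ)]
    norm_num at hnear ⊢
    linarith
  rw [hsplit, hm0, Int.cast_zero, zero_div, add_zero]

theorem mul_self : G * G = (4 : ℝ) • G := by
  ext i j
  rw [Matrix.smul_apply, smul_eq_mul]
  by_cases hne : G i j = -1
  · have hterm (k : ι) : G i k * G j k = -(G i k * G i k) := by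
      rw [hG.apply_eq_neg_of_eq_neg_one hne, mul_neg]
    simp only [hG.mul_self_apply, hterm, Finset.sum_neg_distrib]
    rw [← hG.mul_self_apply, hG.mul_self_apply_self, hne]
    norm_num
  · rcases eq_or_ne i j with rfl | hij
    · rw [hG.mul_self_apply_self, hG.apply_self, mul_one]
    · exact hG.mul_self_apply_of_ne hij hne

theorem isTightFrameGram : IsTightFrameGram G 4 3 where
  isSymm := hG.isSymm
  mul_self := hG.mul_self
  trace_eq := by
    simp only [Matrix.trace, Matrix.diag, hG.apply_self, Finset.sum_const, Finset.card_univ,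
      hG.card_eq]
    norm_num

theorem sum_row (i : ι) : ∑ k, G i k = 0 := by
  choose a ha ha_unique using hG.existsUnique_eq_neg_one
  refine Finset.sum_involution (fun k _ => a k) (fun k _ => ?_) (fun k _ _ h => ?_)
    (fun k _ => Finset.mem_univ _) (fun k _ => ?_)
  · rw [← hG.isSymm.apply i (a k), hG.apply_eq_neg_of_eq_neg_one (ha k), hG.isSymm.apply,
      add_neg_cancel]
  · have := ha k
    rw [h, hG.apply_self] at this
    norm_num at this
  · exact (ha_unique (a k) k ((hG.isSymm.apply _ _).trans (ha k))).symm

theorem apply_eq_edgeCos_of_eq_neg_one (h : G i j = -edgeCos) (hik : G i k = -1) :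
    G j k = edgeCos := by
  rw [← hG.isSymm.apply, hG.apply_eq_neg_of_eq_neg_one hik, h, neg_neg]

theorem add_edgeCos_mul_add_edgeCos (h : G i j = -edgeCos) (k : ι) :
    (G i k + edgeCos) * (G j k + edgeCos) =
      (if G i k = edgeCos ∧ G j k = edgeCos then 4 / 5 else 0) +
      (if G i k = -1 then 2 * edgeCos * (edgeCos - 1) else 0) +
      (if G j k = -1 then 2 * edgeCos * (edgeCos - 1) else 0) := by
  have h' : G j i = -edgeCos := (hG.isSymm.apply i j).trans h
  have hi_one (hk : G i k = 1) : G j k = -edgeCos := hG.eq_of_apply_eq_one hk ▸ h'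
  have hj_one (hk : G j k = 1) : G i k = -edgeCos := hG.eq_of_apply_eq_one hk ▸ h
  have hi_neg := hG.apply_eq_edgeCos_of_eq_neg_one (k := k) h
  have hj_neg := hG.apply_eq_edgeCos_of_eq_neg_one (k := k) h'
  have hs := lt_edgeCos
  have hs' := edgeCos_lt
  have hsq := edgeCos_sq
  have hne : edgeCos ≠ -edgeCos ∧ -edgeCos ≠ edgeCos ∧ edgeCos ≠ -1 ∧ -edgeCos ≠ -1 ∧
      -1 ≠ edgeCos ∧ 1 ≠ edgeCos ∧ (1 : ℝ) ≠ -1 := by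
    refine ⟨?_, ?_, ?_, ?_, ?_, ?_, ?_⟩ <;> linarith
  rcases hG.apply_mem i k with hi | hi | hi | hi
  · rcases hG.apply_mem j k with hj | hj | hj | hj
    · simp only [hi, hj, hne, and_self, if_true, if_false]
      linarith
    · simp only [hi, hj, hne, and_false, if_false]
      ring
    · simp only [hi, hj, hne, and_false, if_true, if_false]
      ring
    · exact absurd (hi.symm.trans (hj_one hj)) hne.1
  · rcases hG.apply_mem j k with hj | hj | hj | hj
    · simp only [hi, hj, hne, false_and, if_false]
      ring
    · simp only [hi, hj, hne, and_self, if_false]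
      ring
    · exact absurd ((hj_neg hj).symm.trans hi) hne.1
    · simp only [hi, hj, hne, and_self, if_false]
      ring
  · simp only [hi, hi_neg hi, hne, false_and, if_true, if_false]
    ring
  · simp only [hi, hi_one hi, hne, and_self, if_false]
    ring

theorem card_common_neighbors_eq_two (h : G i j = -edgeCos) :
    (Finset.univ.filter fun k => G i k = edgeCos ∧ G j k = edgeCos).card = 2 := by
  have hsum : ∑ k, (G i k + edgeCos) * (G j k + edgeCos) = -4 * edgeCos + 12 / 5 := by
    have hexpand (k : ι) : (G i k + edgeCos) * (G j k + edgeCos) =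
        G i k * G j k + edgeCos * G i k + edgeCos * G j k + edgeCos ^ 2 := by ring
    simp only [hexpand, Finset.sum_add_distrib, ← Finset.mul_sum, hG.sum_row, Finset.sum_const,
      Finset.card_univ, hG.card_eq, edgeCos_sq, ← hG.mul_self_apply, hG.mul_self,
      Matrix.smul_apply, h]
    norm_num
  simp only [hG.add_edgeCos_mul_add_edgeCos h, Finset.sum_add_distrib, ← Finset.sum_filter,
    Finset.sum_const, hG.card_filter_eq_neg_one, nsmul_eq_mul, Nat.cast_one, one_mul] at hsum
  rw [← Nat.cast_inj (R := ℝ)]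
  push_cast
  linarith [edgeCos_sq]

theorem apply_eq_edgeCos_of_common_neighbors {a b : ι} (hab : a ≠ b) (h : G i j = -edgeCos)
    (hia : G i a = edgeCos) (hib : G i b = edgeCos) (hja : G j a = edgeCos)
    (hjb : G j b = edgeCos) : G a b = edgeCos := by
  have hexpand : ∑ k, (G i k + G j k - G a k - G b k) ^ 2 =
      (G * G) i i + (G * G) j j + (G * G) a a + (G * G) b b + 2 * (G * G) i j +
        2 * (G * G) a b - 2 * (G * G) i a - 2 * (G * G) i b - 2 * (G * G) j a -
        2 * (G * G) j b := by
    simp only [hG.mul_self_apply, Finset.mul_sum, ← Finset.sum_add_distrib,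
      ← Finset.sum_sub_distrib]
    exact Finset.sum_congr rfl fun k _ => by ring
  have hnonneg : 0 ≤ ∑ k, (G i k + G j k - G a k - G b k) ^ 2 :=
    Finset.sum_nonneg fun k _ => sq_nonneg _
  simp only [hexpand, hG.mul_self, Matrix.smul_apply, smul_eq_mul, hG.apply_self, h, hia, hib,
    hja, hjb] at hnonneg
  have hs := lt_edgeCos
  rcases hG.apply_of_ne hab with h' | h' | h'
  · exact h'
  · linarith
  · linarith

theorem exists_common_neighbors (h : G i j = -edgeCos) :
    ∃ a b, G i a = edgeCos ∧ G i b = edgeCos ∧ G j a = edgeCos ∧ G j b = edgeCos ∧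
      G a b = edgeCos := by
  classical
  obtain ⟨a, b, hab, hfilter⟩ := Finset.card_eq_two.1 (hG.card_common_neighbors_eq_two h)
  simp only [Finset.ext_iff, Finset.mem_filter_univ, Finset.mem_insert,
    Finset.mem_singleton] at hfilter
  have ha := (hfilter a).2 (.inl rfl)
  have hb := (hfilter b).2 (.inr rfl)
  exact ⟨a, b, ha.1, hb.1, ha.2, hb.2,
    hG.apply_eq_edgeCos_of_common_neighbors hab h ha.1 hb.1 ha.2 hb.2⟩

end IsAlmostIcosahedralGram

end AlmostIcosahedral

section GluedTriangles

/-- The Gram matrix of the vertices of two spherical triangles of side `arccos edgeCos` glued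
along the edge `{2, 3}`, where `t` is the inner product of the two tips. -/
noncomputable def gluedTrianglesGram (t : ℝ) : Matrix (Fin 4) (Fin 4) ℝ :=
  !![1, t, edgeCos, edgeCos; t, 1, edgeCos, edgeCos; edgeCos, edgeCos, 1, edgeCos;
    edgeCos, edgeCos, edgeCos, 1]

theorem det_gluedTrianglesGram (t : ℝ) :
    (gluedTrianglesGram t).det = 4 / 5 * (1 - t) * (t + edgeCos) := by
  have hexpand : (gluedTrianglesGram t).det =
      1 - t ^ 2 - 4 * edgeCos ^ 2 * (1 - t) - edgeCos ^ 2 * (1 - t ^ 2)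
        + 4 * edgeCos ^ 3 * (1 - t) := by
    simp [gluedTrianglesGram, Matrix.det_succ_row_zero, Fin.sum_univ_succ, Fin.succAbove]
    ring
  rw [hexpand]
  linear_combination (1 - t) * (-(1 + t) - 4 * (1 - edgeCos)) * edgeCos_sq

theorem abs_gluedTrianglesGram_le_one {t : ℝ} (ht : |t| ≤ 1) (a b : Fin 4) :
    |gluedTrianglesGram t a b| ≤ 1 := by
  have hs : |edgeCos| ≤ 1 := by
    rw [abs_of_pos edgeCos_pos]
    linarith [edgeCos_lt]
  fin_cases a <;> fin_cases b <;> simp [gluedTrianglesGram, ht, hs]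

variable {E : Type*} [NormedAddCommGroup E] [InnerProductSpace ℝ E] {p q a b : E} {η : ℝ}

theorem abs_gram_sub_gluedTrianglesGram_le (hp : ‖p‖ = 1) (hq : ‖q‖ = 1) (ha : ‖a‖ = 1)
    (hb : ‖b‖ = 1) (hpa : |⟪p, a⟫ - edgeCos| ≤ η) (hpb : |⟪p, b⟫ - edgeCos| ≤ η)
    (hqa : |⟪q, a⟫ - edgeCos| ≤ η) (hqb : |⟪q, b⟫ - edgeCos| ≤ η)
    (hab : |⟪a, b⟫ - edgeCos| ≤ η) (i j : Fin 4) :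
    |Matrix.gram ℝ ![p, q, a, b] i j - gluedTrianglesGram ⟪p, q⟫ i j| ≤ η := by
  have hη : 0 ≤ η := (abs_nonneg _).trans hpa
  fin_cases i <;> fin_cases j <;>
    simp [gluedTrianglesGram, Matrix.gram_apply, real_inner_comm p q, real_inner_comm p a,
      real_inner_comm p b, real_inner_comm q a, real_inner_comm q b, real_inner_comm a b, *]

theorem abs_inner_add_edgeCos_le_of_glued [FiniteDimensional ℝ E] (hE : Module.finrank ℝ E < 4)
    (hp : ‖p‖ = 1) (hq : ‖q‖ = 1) (ha : ‖a‖ = 1)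
    (hb : ‖b‖ = 1) (hpa : |⟪p, a⟫ - edgeCos| ≤ η) (hpb : |⟪p, b⟫ - edgeCos| ≤ η)
    (hqa : |⟪q, a⟫ - edgeCos| ≤ η) (hqb : |⟪q, b⟫ - edgeCos| ≤ η)
    (hab : |⟪a, b⟫ - edgeCos| ≤ η) (hpq : ⟪p, q⟫ ≤ -2 / 5) : |⟪p, q⟫ + edgeCos| ≤ 100 * η := by
  have hunit (i : Fin 4) : ‖![p, q, a, b] i‖ = 1 := by
    fin_cases i <;> assumption
  have hdet : ‖(Matrix.gram ℝ ![p, q, a, b]).det - (gluedTrianglesGram ⟪p, q⟫).det‖ ≤ 96 * η := by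
    refine (norm_det_sub_det_le (fun i j => abs_inner_le_one (hunit i) (hunit j))
      (abs_gluedTrianglesGram_le_one (abs_inner_le_one hp hq))
      (abs_gram_sub_gluedTrianglesGram_le hp hq ha hb hpa hpb hqa hqb hab)).trans_eq ?_
    norm_num [Nat.factorial]
    ring
  rw [det_gram_eq_zero_of_finrank_lt _ (by rwa [Fintype.card_fin]), det_gluedTrianglesGram,
    zero_sub, norm_neg, Real.norm_eq_abs, abs_mul, abs_of_nonneg (by linarith)] at hdet
  have hgap : 1.12 * |⟪p, q⟫ + edgeCos| ≤ 4 / 5 * (1 - ⟪p, q⟫) * |⟪p, q⟫ + edgeCos| := by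
    gcongr
    linarith
  linarith [abs_nonneg (⟪p, q⟫ + edgeCos)]

end GluedTriangles

section Rounding

variable {t δ : ℝ}

theorem abs_sub_edgeCos_le (hδ₀ : 0 ≤ δ) (ht₁ : 1 / 10 ≤ t) (ht₂ : t ≤ edgeCos + δ)
    (hf : -(264 * δ) ≤ delsartePoly t) : |t - edgeCos| ≤ 1000 * δ := by
  unfold delsartePoly at hf
  have hfactor : 1.1 * 0.547 ^ 2 ≤ (t + 1) * (t + edgeCos) ^ 2 := by
    gcongr <;> linarith [lt_edgeCos]
  refine abs_le.2 ⟨?_, by linarith⟩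
  by_contra! h
  nlinarith [mul_le_mul_of_nonneg_right hfactor (by linarith : 0 ≤ edgeCos - t)]

theorem abs_add_one_le (hδ₀ : 0 ≤ δ) (ht₁ : -1 ≤ t) (ht₂ : t ≤ -7 / 10)
    (hf : -(264 * δ) ≤ delsartePoly t) : |t + 1| ≤ 4000 * δ := by
  unfold delsartePoly at hf
  have hfactor : 0.252 ^ 2 * 1.147 ≤ (-(t + edgeCos)) ^ 2 * (edgeCos - t) := by
    gcongr <;> linarith [lt_edgeCos, edgeCos_lt]
  rw [abs_of_nonneg (by linarith)]
  nlinarith [mul_le_mul_of_nonneg_left hfactor (by linarith : 0 ≤ t + 1)]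

theorem abs_add_edgeCos_le (hδ : δ ≤ 1 / 10 ^ 8) (ht₁ : -7 / 10 ≤ t) (ht₂ : t ≤ 1 / 10)
    (hf : -(264 * δ) ≤ delsartePoly t) : |t + edgeCos| ≤ 3 / 1000 := by
  unfold delsartePoly at hf
  have hfactor : 0.34 ≤ (t + 1) * (edgeCos - t) := by
    nlinarith [mul_nonneg (by linarith : 0 ≤ t + 0.7) (by linarith : 0 ≤ 0.1 - t),
      mul_nonneg (by linarith : 0 ≤ t + 1) (by linarith [lt_edgeCos] : 0 ≤ edgeCos - 0.447)]
  refine abs_le_of_sq_le_sq ?_ (by norm_num)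
  nlinarith [mul_le_mul_of_nonneg_right hfactor (sq_nonneg (t + edgeCos))]

/-- The inner product `1`, `edgeCos`, `-edgeCos` or `-1` of icosahedron vertices that is closest
to `t`, up to the choice of the break points. -/
noncomputable def icosahedralRound (t : ℝ) : ℝ :=
  if t ≤ -7 / 10 then -1 else if t ≤ 1 / 10 then -edgeCos else if t ≤ 9 / 10 then edgeCos else 1

theorem icosahedralRound_one : icosahedralRound 1 = 1 := by
  norm_num [icosahedralRound]

theorem abs_icosahedralRound_le_one (t : ℝ) : |icosahedralRound t| ≤ 1 := by
  have hs := edgeCos_pos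
  have hs' := edgeCos_lt
  unfold icosahedralRound
  split_ifs <;> rw [abs_le] <;> constructor <;> linarith

theorem icosahedralRound_cases (hδ₀ : 0 ≤ δ) (hδ : δ ≤ 1 / 10 ^ 8) (ht₁ : -1 ≤ t)
    (ht₂ : t ≤ edgeCos + δ) (hf : -(264 * δ) ≤ delsartePoly t) :
    icosahedralRound t = edgeCos ∧ |t - edgeCos| ≤ 1000 * δ ∨
      icosahedralRound t = -edgeCos ∧ |t + edgeCos| ≤ 3 / 1000 ∨
      icosahedralRound t = -1 ∧ |t + 1| ≤ 4000 * δ := by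
  have ht : t ≤ 9 / 10 := by linarith [edgeCos_lt]
  unfold icosahedralRound
  split_ifs with h₁ h₂
  · exact .inr (.inr ⟨rfl, abs_add_one_le hδ₀ ht₁ h₁ hf⟩)
  · exact .inr (.inl ⟨rfl, abs_add_edgeCos_le hδ (not_le.1 h₁).le h₂ hf⟩)
  · exact .inl ⟨rfl, abs_sub_edgeCos_le hδ₀ (not_le.1 h₂).le ht₂ hf⟩

end Rounding

section NearIcosahedron

variable {ι : Type*} [Fintype ι] {x : ι → EuclideanSpace ℝ (Fin 3)} {δ : ℝ}

/-- The entrywise rounding of the Gram matrix of `x` to the inner products of icosahedron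
vertices. -/
noncomputable def roundedGram (x : ι → EuclideanSpace ℝ (Fin 3)) : Matrix ι ι ℝ :=
  .of fun i j => icosahedralRound ⟪x i, x j⟫

omit [Fintype ι] in
theorem roundedGram_apply_self (hx : ∀ i, ‖x i‖ = 1) (i : ι) : roundedGram x i i = 1 := by
  rw [roundedGram, Matrix.of_apply, real_inner_self_eq_norm_sq, hx, one_pow, icosahedralRound_one]

theorem abs_gram_mul_self_sub_le (hcard : Fintype.card ι = 12) (hx : ∀ i, ‖x i‖ = 1) (i j : ι) :
    |(Matrix.gram ℝ x * Matrix.gram ℝ x) i j - 4 * ⟪x i, x j⟫| ≤ √(frameExcess x) := by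
  have h := sq_frameCoeff_dotProduct_sub_le hx (x i) (x j)
  rw [hcard, finrank_euclideanSpace_fin, hx, hx] at h
  have hmul : (Matrix.gram ℝ x * Matrix.gram ℝ x) i j =
      frameCoeff x (x i) ⬝ᵥ frameCoeff x (x j) := by
    simp only [Matrix.mul_apply, Matrix.gram_apply, frameCoeff, dotProduct, real_inner_comm]
  rw [hmul]
  refine Real.abs_le_sqrt ?_
  norm_num at h ⊢
  exact h

variable (hcard : Fintype.card ι = 12) (hδ₀ : 0 ≤ δ) (hδ : δ ≤ 1 / 10 ^ 8) (hx : ∀ i, ‖x i‖ = 1)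
  (hsep : ∀ i j, i ≠ j → ⟪x i, x j⟫ ≤ edgeCos + δ)

include hcard hδ₀ hδ hx hsep

theorem roundedGram_cases {i j : ι} (hij : i ≠ j) :
    roundedGram x i j = edgeCos ∧ |⟪x i, x j⟫ - edgeCos| ≤ 1000 * δ ∨
      roundedGram x i j = -edgeCos ∧ |⟪x i, x j⟫ + edgeCos| ≤ 3 / 1000 ∨
      roundedGram x i j = -1 ∧ |⟪x i, x j⟫ + 1| ≤ 4000 * δ :=
  icosahedralRound_cases hδ₀ hδ (abs_le.1 (abs_inner_le_one (hx i) (hx j))).1 (hsep i j hij)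
    (le_delsartePoly_inner hcard hδ₀ hδ hx hsep hij)

theorem abs_inner_sub_roundedGram_le (i j : ι) : |⟪x i, x j⟫ - roundedGram x i j| ≤ 3 / 1000 := by
  rcases eq_or_ne i j with rfl | hij
  · rw [roundedGram_apply_self hx, real_inner_self_eq_norm_sq, hx]
    norm_num
  · rcases roundedGram_cases hcard hδ₀ hδ hx hsep hij with ⟨h, ht⟩ | ⟨h, ht⟩ | ⟨h, ht⟩ <;>
      rw [h, ← sub_neg_eq_add] at * <;> linarith

theorem isAlmostIcosahedralGram_roundedGram : IsAlmostIcosahedralGram (roundedGram x) where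
  card_eq := hcard
  isSymm := by
    ext i j
    rw [Matrix.transpose_apply, roundedGram, Matrix.of_apply, Matrix.of_apply, real_inner_comm]
  apply_self := roundedGram_apply_self hx
  apply_of_ne hij :=
    (roundedGram_cases hcard hδ₀ hδ hx hsep hij).imp And.left (Or.imp And.left And.left)
  abs_mul_self_sub_le i j := by
    have hentry := abs_inner_sub_roundedGram_le hcard hδ₀ hδ hx hsep
    have hsq := abs_mul_apply_sub_mul_apply_le (A := Matrix.gram ℝ x) (A' := Matrix.gram ℝ x)
      (B := roundedGram x) (fun i j => abs_inner_le_one (hx i) (hx j))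
      (fun _ _ => abs_icosahedralRound_le_one _) hentry hentry i j
    have hfour := abs_gram_mul_self_sub_le hcard hx i j
    have hexcess : √(frameExcess x) ≤ 2 / 1000 := by
      rw [Real.sqrt_le_left (by norm_num)]
      linarith [frameExcess_le hcard hδ₀ hδ hx hsep]
    have hij := hentry i j
    rw [hcard] at hsq
    rw [abs_le] at hsq hfour hij ⊢
    push_cast at hsq
    constructor <;> linarith

theorem abs_inner_sub_edgeCos_le {i j : ι} (h : roundedGram x i j = edgeCos) :
    |⟪x i, x j⟫ - edgeCos| ≤ 1000 * δ := by
  have hs := lt_edgeCos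
  have hs' := edgeCos_lt
  have hij : i ≠ j := by
    rintro rfl
    linarith [roundedGram_apply_self hx i]
  rcases roundedGram_cases hcard hδ₀ hδ hx hsep hij with ⟨-, ht⟩ | ⟨h', -⟩ | ⟨h', -⟩
  · exact ht
  · linarith
  · linarith

theorem abs_inner_add_edgeCos_le {i j : ι} (h : roundedGram x i j = -edgeCos) :
    |⟪x i, x j⟫ + edgeCos| ≤ 10 ^ 5 * δ := by
  have hG := isAlmostIcosahedralGram_roundedGram hcard hδ₀ hδ hx hsep
  obtain ⟨a, b, hia, hib, hja, hjb, hab⟩ := hG.exists_common_neighbors h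
  have hedge {k l : ι} (hkl : roundedGram x k l = edgeCos) :
      |⟪x k, x l⟫ - edgeCos| ≤ 1000 * δ :=
    abs_inner_sub_edgeCos_le hcard hδ₀ hδ hx hsep hkl
  have hij := abs_le.1 (abs_inner_sub_roundedGram_le hcard hδ₀ hδ hx hsep i j)
  rw [h] at hij
  have hbound := abs_inner_add_edgeCos_le_of_glued (by simp) (hx i) (hx j) (hx a) (hx b)
    (hedge hia) (hedge hib) (hedge hja) (hedge hjb) (hedge hab) (by linarith [lt_edgeCos])
  linarith

theorem abs_inner_sub_roundedGram_le_mul (i j : ι) :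
    |⟪x i, x j⟫ - roundedGram x i j| ≤ 10 ^ 5 * δ := by
  rcases eq_or_ne i j with rfl | hij
  · rw [roundedGram_apply_self hx, real_inner_self_eq_norm_sq, hx, one_pow, sub_self, abs_zero]
    positivity
  · rcases roundedGram_cases hcard hδ₀ hδ hx hsep hij with ⟨h, ht⟩ | ⟨h, -⟩ | ⟨h, ht⟩
    · rw [h]
      linarith
    · rw [h, sub_neg_eq_add]
      exact abs_inner_add_edgeCos_le hcard hδ₀ hδ hx hsep h
    · rw [h, sub_neg_eq_add]
      linarith

theorem sq_norm_le_frameCoeff_dotProduct (v : EuclideanSpace ℝ (Fin 3)) :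
    ‖v‖ ^ 2 ≤ frameCoeff x v ⬝ᵥ frameCoeff x v := by
  have h := sq_frameCoeff_dotProduct_sub_le hx v v
  have hexcess : frameExcess x ≤ 1 := by
    linarith [frameExcess_le hcard hδ₀ hδ hx hsep]
  rw [hcard, finrank_euclideanSpace_fin, real_inner_self_eq_norm_sq] at h
  have habs := abs_le_of_sq_le_sq' (h.trans ((mul_le_mul_of_nonneg_right hexcess
    (by positivity)).trans_eq (by rw [one_mul, ← sq]))) (by positivity)
  norm_num at habs
  linarith [habs.1, sq_nonneg ‖v‖]

theorem exists_icosahedron_near : ∃ w : ι → EuclideanSpace ℝ (Fin 3), (∀ i, ‖w i‖ = 1) ∧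
    (∀ i j, i ≠ j → ⟪w i, w j⟫ ∈ ({edgeCos, -edgeCos, -1} : Set ℝ)) ∧
    ∀ i, ‖x i - w i‖ ≤ 2 * 10 ^ 6 * δ := by
  have hG := isAlmostIcosahedralGram_roundedGram hcard hδ₀ hδ hx hsep
  have hframe : IsTightFrameGram (roundedGram x) 4
      (Module.finrank ℝ (EuclideanSpace ℝ (Fin 3))) := by
    rw [finrank_euclideanSpace_fin]
    exact hG.isTightFrameGram
  obtain ⟨w, hw, hxw⟩ := hframe.exists_gram_eq_and_norm_sub_le (by norm_num)
    (by positivity) (abs_inner_sub_roundedGram_le_mul hcard hδ₀ hδ hx hsep)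
    (by rw [hcard]; push_cast; linarith)
    fun v => (one_mul (‖v‖ ^ 2)).trans_le
      (sq_norm_le_frameCoeff_dotProduct hcard hδ₀ hδ hx hsep v)
  have hinner (i j : ι) : ⟪w i, w j⟫ = roundedGram x i j := by rw [← hw, Matrix.gram_apply]
  refine ⟨w, fun i => ?_, fun i j hij => ?_, fun i => (hxw i).trans ?_⟩
  · rw [← pow_left_inj₀ (norm_nonneg _) zero_le_one two_ne_zero, one_pow,
      ← real_inner_self_eq_norm_sq, hinner, hG.apply_self]
  · rw [hinner]
    exact hG.apply_of_ne hij
  · have hsqrt : √(4 : ℝ) = 2 := by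
      rw [show (4 : ℝ) = 2 ^ 2 by norm_num, Real.sqrt_sq (by norm_num)]
    rw [hcard, Real.sqrt_one, hsqrt]
    push_cast
    linarith

end NearIcosahedron

/-- Stability of the icosahedron: if `k ≥ 12` unit vectors in `ℝ³` have pairwise
spherical distances at least `2(φ_I - ε)` where `φ_I = (1/2)·arccos(1/√5)` and
`0 ≤ ε < 10⁻⁹`, then `k = 12` and the vectors are within spherical distance
`44⁹·25·10⁷·ε` of the vertices of a regular icosahedron inscribed in the unit sphere. -/
theorem icosahedron_stability (k : ℕ) (hk : 12 ≤ k) (ε : ℝ)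
    (hε0 : 0 ≤ ε) (hε1 : ε < 1 / 10 ^ 9)
    (x : Fin k → EuclideanSpace ℝ (Fin 3))
    (hx : ∀ i, ‖x i‖ = 1)
    (hdist : ∀ i j : Fin k, i ≠ j →
      2 * (Real.arccos (1 / Real.sqrt 5) / 2 - ε) ≤ Real.arccos ⟪x i, x j⟫) :
    k = 12 ∧
    ∃ w : Fin k → EuclideanSpace ℝ (Fin 3),
      (∀ i, ‖w i‖ = 1) ∧
      (∀ i j : Fin k, i ≠ j →
        ⟪w i, w j⟫ ∈ ({1 / Real.sqrt 5, -(1 / Real.sqrt 5), -1} : Set ℝ)) ∧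
      (∀ i, Real.arccos ⟪x i, w i⟫ ≤ (44 : ℝ) ^ 9 * 25 * 10 ^ 7 * ε) := by
  have hsep (i j : Fin k) (hij : i ≠ j) : ⟪x i, x j⟫ ≤ edgeCos + 2 * ε := by
    refine le_add_of_arccos_sub_le_arccos_s3 ?_ ?_ (by positivity) ?_
    · rw [abs_of_pos edgeCos_pos]
      linarith [edgeCos_lt]
    · exact abs_inner_le_one (hx i) (hx j)
    · unfold edgeCos
      linarith [hdist i j hij]
  have hδ₀ : 0 ≤ 2 * ε := by positivity
  have hδ : 2 * ε ≤ 1 / 10 ^ 8 := by linarith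
  have hk12 : k = 12 :=
    le_antisymm (by simpa only [Fintype.card_fin] using card_le_twelve hδ₀ hδ hx hsep) hk
  obtain ⟨w, hw, hinner, hxw⟩ :=
    exists_icosahedron_near ((Fintype.card_fin k).trans hk12) hδ₀ hδ hx hsep
  refine ⟨hk12, w, hw, hinner, fun i => ?_⟩
  calc Real.arccos ⟪x i, w i⟫ ≤ 2 * ‖x i - w i‖ := arccos_inner_le_two_mul_norm_sub (hx i) (hw i)
    _ ≤ 2 * (2 * 10 ^ 6 * (2 * ε)) := by gcongr; exact hxw i
    _ ≤ (44 : ℝ) ^ 9 * 25 * 10 ^ 7 * ε := by linarith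
end
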